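/- arXiv:0909.3052 — 2 statements merged into one kernel-verified Lean document; each statement's English description precedes it below -/
import Mathlib

section
/- For every real z > b_γ, the following almost-sure limits hold as n → ∞: (1/n)·E_{n,12}·(Λ_n − z·I_{p−k})^{-1}·E_{n,12}ᵀ → γ^{-1}·m(z)·I_k; (1/n)·E_{n,21}ᵀ·(Λ_n − z·I_{p−k})^{-1}·E_{n,21} → γ^{-1}·m(z)·I_k; and (1/n)·E_{n,12}·(Λ_n − z·I_{p−k})^{-1}·Λ_n^{1/2}·E_{n,21} → 0. -/
/-!
Write the eigenvalues `λ_{n,α}` as functions of `W`. Conditionally on `W`, each entry of the three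
products is a weighted sum `(1/n) ∑ d_α g(u_α) g(v_α)` of products of independent standard Gaussians.
The weights `(λ_α - z)⁻¹` or `(λ_α - z)⁻¹ √λ_α` are bounded as soon as `‖W‖² ≤ n b` for some
`b ∈ (b_γ, z)`. A Hanson–Wright inequality (`gPi_quadForm_exp`, `gPi_bilin_exp`) and Borel–Cantelli
then show that each entry differs from its conditional mean by an almost surely vanishing amount
(`NoiseBlocks.weighted_as`). The conditional mean is `0` off the diagonal and for the cross product,
and `(1/n) ∑ (λ_α - z)⁻¹` on the diagonal. Conditioning requires the ordered eigenvalues to depend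
measurably on `W`; `measurable_eigs` obtains this from the Lusin–Souslin theorem. Two facts about
`W` remain.

The upper edge. `wishart_edge` bounds the probability that `‖W‖² > n b` by `4 n e^{-cn}`. The
proof is an induction on the number of rows: after rotations, `W` is bordered by a row and a column
whose lengths are at most about `√p` and `√n` (`edge_step_mem`, `edge_bound`). The inequality
carried along is slightly stronger than a norm bound, so that it is stable under bordering.

The Stieltjes transform. Let `T = tr (n z - WᵀW)⁻¹ = -(1/n) ∑ (λ_α - z)⁻¹`. Removing one row of `W`
at a time, Sherman–Morrison and Hanson–Wright give `(1 - T)(z T - γ⁻¹) - T → 0` almost surely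
(`mp_equation_det`, `loo_prob`, `NoiseBlocks.mp_equation_as`). The quadratic has two roots. Since `T`
decreases in `z` while the larger root increases, comparison with the same equation at a second
point `z' ∈ (b_γ, z)` forces convergence to the smaller root (`root_select`). In the
parametrization `z = (κ + 1)(κ + γ⁻¹)/κ` this root is `γ⁻¹/(γ⁻¹ + κ)`, which equals `-γ⁻¹ m(z)` by an
explicit evaluation of the Marchenko–Pastur integral (`mpStieltjes_formula`).
-/

open MeasureTheory ProbabilityTheory Filter Matrix Topology

noncomputable section

instance matrixMeasurableSpace {m n : Type*} : MeasurableSpace (Matrix m n ℝ) :=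
  MeasurableSpace.pi

/-- Convergence in distribution (weak convergence of laws) of a sequence of random elements. -/
def TendstoInDist {Ω E : Type*} [MeasurableSpace Ω] [MeasurableSpace E] [TopologicalSpace E]
    (P : Measure Ω) (X : ℕ → Ω → E) (ν : Measure E) : Prop :=
  ∀ f : BoundedContinuousFunction E ℝ,
    Tendsto (fun n => ∫ ω, f (X n ω) ∂P) atTop (𝓝 (∫ x, f x ∂ν))

/-- Convergence to zero in probability. -/
def TendstoInProbZero {Ω : Type*} [MeasurableSpace Ω] (P : Measure Ω) (X : ℕ → Ω → ℝ) : Prop :=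
  ∀ ε : ℝ, 0 < ε → Tendsto (fun n => P {ω | ε ≤ |X n ω|}) atTop (𝓝 0)

/-- `ν` is a centered multivariate Gaussian measure with covariance function `C`
(characterized through one-dimensional projections). -/
def IsCenteredGaussianCov {ι : Type*} [Fintype ι] (ν : Measure (ι → ℝ)) (C : ι → ι → ℝ) : Prop :=
  ∀ a : ι → ℝ,
    Measure.map (fun x => ∑ i, a i * x i) ν
      = gaussianReal 0 (Real.toNNReal (∑ i, ∑ j, a i * C i j * a j))

/-- The coordinates of `X` are iid `N(0, v)` random variables. -/
def IIDGaussian {Ω ι : Type*} [MeasurableSpace Ω] [Fintype ι] (P : Measure Ω)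
    (X : Ω → ι → ℝ) (v : NNReal) : Prop :=
  Measure.map X P = Measure.pi fun _ : ι => gaussianReal 0 v

/-- Entries of a matrix, as a function on pairs of indices. -/
def matEntries {m n : Type*} (A : Matrix m n ℝ) : m × n → ℝ := fun q => A q.1 q.2

/-- The eigenvalues of a (Hermitian) real matrix, sorted in decreasing order. -/
def eigsDesc {p : ℕ} (A : Matrix (Fin p) (Fin p) ℝ) : List ℝ :=
  if h : A.IsHermitian then (List.ofFn h.eigenvalues).insertionSort (· ≥ ·) else []

/-- The `i`-th largest eigenvalue of a (Hermitian) real matrix (`i` is 0-based). -/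
def ithEigDesc {p : ℕ} (A : Matrix (Fin p) (Fin p) ℝ) (i : ℕ) : ℝ :=
  (eigsDesc A).getD i 0

/-- Lower edge `a_γ = (1 - γ^{-1/2})²` of the Marchenko–Pastur law. -/
def aGamma (γ : ℝ) : ℝ := (1 - 1 / Real.sqrt γ) ^ 2

/-- Upper edge `b_γ = (1 + γ^{-1/2})²` of the Marchenko–Pastur law. -/
def bGamma (γ : ℝ) : ℝ := (1 + 1 / Real.sqrt γ) ^ 2

/-- Density of the Marchenko–Pastur law with aspect ratio `γ`. -/
def mpDensity (γ t : ℝ) : ℝ :=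
  if t ∈ Set.Icc (aGamma γ) (bGamma γ) then
    γ * Real.sqrt ((bGamma γ - t) * (t - aGamma γ)) / (2 * Real.pi * t)
  else 0

/-- The Marchenko–Pastur law with aspect ratio `γ`. -/
def mpMeasure (γ : ℝ) : Measure ℝ :=
  volume.withDensity fun t => ENNReal.ofReal (mpDensity γ t)

/-- Stieltjes transform `m(z) = ∫ (t - z)⁻¹ dFMP_γ(t)` of the Marchenko–Pastur law. -/
def mpStieltjes (γ z : ℝ) : ℝ := ∫ t, (t - z)⁻¹ ∂(mpMeasure γ)

/-- The spiked low-rank-plus-noise model `X_n = √n U_n D_n V_nᵀ + E_n`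
(Assumptions A1–A3, with `s = σ²` the noise variance and without the CLT
assumption on the factor strengths, which is stated separately when needed). -/
structure SpikedModel (k : ℕ) (γ s : ℝ) (p : ℕ → ℕ) (Ω : Type*) [MeasurableSpace Ω]
    (P : Measure Ω) (μ : Fin k → ℝ) where
  U : ∀ n : ℕ, Ω → Matrix (Fin n) (Fin k) ℝ
  V : ∀ n : ℕ, Ω → Matrix (Fin (p n)) (Fin k) ℝ
  d : ∀ n : ℕ, Ω → Fin k → ℝ
  E : ∀ n : ℕ, Ω → Matrix (Fin n) (Fin (p n)) ℝ
  /- A1 -/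
  orthU : ∀ n ω, (U n ω)ᵀ * U n ω = 1
  orthV : ∀ n ω, (V n ω)ᵀ * V n ω = 1
  aspect : Tendsto (fun n : ℕ => Real.sqrt n * ((n : ℝ) / (p n) - γ)) atTop (𝓝 0)
  /- A2 (except for the CLT on the factor strengths) -/
  dpos : ∀ n ω i, 0 < d n ω i
  dstrictanti : ∀ n ω, StrictAnti (d n ω)
  dconv : ∀ᵐ ω ∂P, ∀ i, Tendsto (fun n => d n ω i) atTop (𝓝 (Real.sqrt (μ i)))
  /- A3 -/
  Egauss : ∀ n, IIDGaussian P (fun ω => matEntries (E n ω)) (Real.toNNReal s)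
  Eindep : ∀ n, IndepFun (E n) (fun ω => (U n ω, d n ω, V n ω)) P

/-- The observed data matrix `X_n = √n U_n D_n V_nᵀ + E_n`. -/
def SpikedModel.X {k : ℕ} {γ s : ℝ} {p : ℕ → ℕ} {Ω : Type*} [MeasurableSpace Ω]
    {P : Measure Ω} {μ : Fin k → ℝ} (M : SpikedModel k γ s p Ω P μ) (n : ℕ) (ω : Ω) :
    Matrix (Fin n) (Fin (p n)) ℝ :=
  Real.sqrt n • (M.U n ω * Matrix.diagonal (M.d n ω) * (M.V n ω)ᵀ) + M.E n ω

/-- `√n Uh (diagonal √μh) Vhᵀ` is the SVD of `X` truncated to the `k` largest terms: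
the `μh i` are the `k` largest eigenvalues of `(1/n) Xᵀ X` in decreasing order, the columns
of `Vh` are corresponding orthonormal eigenvectors (right singular vectors), and the columns
of `Uh` are corresponding orthonormal left singular vectors. -/
def IsTruncatedSVD {n q k : ℕ} (X : Matrix (Fin n) (Fin q) ℝ)
    (Uh : Matrix (Fin n) (Fin k) ℝ) (μh : Fin k → ℝ) (Vh : Matrix (Fin q) (Fin k) ℝ) : Prop :=
  Uhᵀ * Uh = 1 ∧ Vhᵀ * Vh = 1 ∧ Antitone μh ∧ (∀ i, 0 ≤ μh i) ∧
  (∀ i : Fin k, μh i = ithEigDesc ((1 / (n : ℝ)) • (Xᵀ * X)) i) ∧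
  (∀ i : Fin k, (Xᵀ * X) *ᵥ (fun j => Vh j i) = ((n : ℝ) * μh i) • fun j => Vh j i) ∧
  (∀ i : Fin k, X *ᵥ (fun j => Vh j i) = (Real.sqrt n * Real.sqrt (μh i)) • fun j => Uh j i)

/-- Almost sure limit `μ̄` of the top sample eigenvalues (`s = σ²`). -/
def muBar (γ s μi : ℝ) : ℝ :=
  if s / Real.sqrt γ < μi then (μi + s) * (1 + s / (γ * μi))
  else s * (1 + 1 / Real.sqrt γ) ^ 2

/-- Limiting covariance matrix `Σ̄` of the fluctuations of the top sample eigenvalues. -/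
def sigmaBar {k : ℕ} (γ s : ℝ) (μ : Fin k → ℝ) (Cmat : Matrix (Fin k) (Fin k) ℝ) :
    Fin k → Fin k → ℝ := fun i j =>
  if s / Real.sqrt γ < μ i ∧ s / Real.sqrt γ < μ j then
    Cmat i j * (1 - s ^ 2 / (γ * (μ i) ^ 2)) * (1 - s ^ 2 / (γ * (μ j) ^ 2))
      + (if i = j then 2 * s * (2 * μ i + (1 + γ⁻¹) * s) * (1 - s ^ 2 / (γ * (μ i) ^ 2)) else 0)
  else 0

/-- The independent noise blocks `E_{n,12}`, `E_{n,21}` and the scaled Wishart eigenvalues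
`Λ_n` appearing after the change of basis. -/
structure NoiseBlocks (k : ℕ) (γ : ℝ) (p : ℕ → ℕ) (Ω : Type*) [MeasurableSpace Ω]
    (P : Measure Ω) where
  E12 : ∀ n : ℕ, Ω → Matrix (Fin k) (Fin (p n - k)) ℝ
  E21 : ∀ n : ℕ, Ω → Matrix (Fin (p n - k)) (Fin k) ℝ
  W : ∀ n : ℕ, Ω → Matrix (Fin (n - k)) (Fin (p n - k)) ℝ
  lam : ∀ n : ℕ, Ω → Fin (p n - k) → ℝ
  aspect : Tendsto (fun n : ℕ => (n : ℝ) / (p n)) atTop (𝓝 γ)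
  pTop : Tendsto p atTop atTop
  E12gauss : ∀ n, IIDGaussian P (fun ω => matEntries (E12 n ω)) 1
  E21gauss : ∀ n, IIDGaussian P (fun ω => matEntries (E21 n ω)) 1
  Wgauss : ∀ n, IIDGaussian P (fun ω => matEntries (W n ω)) 1
  /-- `n λ_{n,α}` are the decreasingly ordered eigenvalues of the white Wishart
  matrix `Wᵀ W`. -/
  lamEig : ∀ n ω, ∀ α : Fin (p n - k), (n : ℝ) * lam n ω α = ithEigDesc ((W n ω)ᵀ * W n ω) α
  indep1 : ∀ n, IndepFun (E12 n) (fun ω => (E21 n ω, W n ω)) P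
  indep2 : ∀ n, IndepFun (E21 n) (W n) P

namespace NoiseBlocks

variable {k : ℕ} {γ : ℝ} {p : ℕ → ℕ} {Ω : Type*} [MeasurableSpace Ω] {P : Measure Ω}

/-- `(1/n) E_{n,12} (Λ_n − z I)⁻¹ E_{n,12}ᵀ`. -/
def q1 (B : NoiseBlocks k γ p Ω P) (n : ℕ) (ω : Ω) (z : ℝ) : Matrix (Fin k) (Fin k) ℝ :=
  (1 / (n : ℝ)) • (B.E12 n ω * (Matrix.diagonal (B.lam n ω) - z • 1)⁻¹ * (B.E12 n ω)ᵀ)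

/-- `(1/n) E_{n,21}ᵀ (Λ_n − z I)⁻¹ E_{n,21}`. -/
def q2 (B : NoiseBlocks k γ p Ω P) (n : ℕ) (ω : Ω) (z : ℝ) : Matrix (Fin k) (Fin k) ℝ :=
  (1 / (n : ℝ)) • ((B.E21 n ω)ᵀ * (Matrix.diagonal (B.lam n ω) - z • 1)⁻¹ * B.E21 n ω)

/-- `(1/n) E_{n,12} (Λ_n − z I)⁻¹ Λ_n^{1/2} E_{n,21}`. -/
def q3 (B : NoiseBlocks k γ p Ω P) (n : ℕ) (ω : Ω) (z : ℝ) : Matrix (Fin k) (Fin k) ℝ :=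
  (1 / (n : ℝ)) • (B.E12 n ω * (Matrix.diagonal (B.lam n ω) - z • 1)⁻¹ *
    Matrix.diagonal (fun α => Real.sqrt (B.lam n ω α)) * B.E21 n ω)

/-- `F_n(z)`. -/
def Fn (B : NoiseBlocks k γ p Ω P) (n : ℕ) (ω : Ω) (z : ℝ) : Matrix (Fin k) (Fin k) ℝ :=
  Real.sqrt n • (B.q1 n ω z - (γ⁻¹ * mpStieltjes γ z) • 1)

/-- `G_n(z)`. -/
def Gn (B : NoiseBlocks k γ p Ω P) (n : ℕ) (ω : Ω) (z : ℝ) : Matrix (Fin k) (Fin k) ℝ :=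
  Real.sqrt n • B.q3 n ω z

/-- `H_n(z)`. -/
def Hn (B : NoiseBlocks k γ p Ω P) (n : ℕ) (ω : Ω) (z : ℝ) : Matrix (Fin k) (Fin k) ℝ :=
  Real.sqrt n • (B.q2 n ω z - (γ⁻¹ * mpStieltjes γ z) • 1)

end NoiseBlocks

/-- The difference quotient `(m(z₁) − m(z₂))/(z₁ − z₂)`, interpreted as `m'(z₁)` when
`z₁ = z₂`: covariance kernel of `F` and `H`. -/
def qFH (γ z₁ z₂ : ℝ) : ℝ :=
  if z₁ = z₂ then deriv (mpStieltjes γ) z₁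
  else (mpStieltjes γ z₁ - mpStieltjes γ z₂) / (z₁ - z₂)

/-- The difference quotient `(z₁ m(z₁) − z₂ m(z₂))/(z₁ − z₂)`, interpreted as
`m(z₁) + z₁ m'(z₁)` when `z₁ = z₂`: covariance kernel of `G`. -/
def qG (γ z₁ z₂ : ℝ) : ℝ :=
  if z₁ = z₂ then mpStieltjes γ z₁ + z₁ * deriv (mpStieltjes γ) z₁
  else (z₁ * mpStieltjes γ z₁ - z₂ * mpStieltjes γ z₂) / (z₁ - z₂)

/-- Covariance function of the limiting Gaussian family
`(F(z_r), G(z_r), H(z_r))_{r}` (index component `Fin 3`: `0 ↦ F`, `1 ↦ G`, `2 ↦ H`);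
it encodes that `F`, `G`, `H` are mutually independent, that `F` and `H` are symmetric,
and that all covariances vanish except the ones prescribed. -/
def covFGH (γ : ℝ) {l k : ℕ} (zs : Fin l → ℝ) :
    Fin l × Fin 3 × Fin k × Fin k → Fin l × Fin 3 × Fin k × Fin k → ℝ := fun q q' =>
  if q.2.1 = q'.2.1 then
    if q.2.1 = 1 then
      γ⁻¹ * qG γ (zs q.1) (zs q'.1) *
        (if q.2.2.1 = q'.2.2.1 ∧ q.2.2.2 = q'.2.2.2 then 1 else 0)
    else
      γ⁻¹ * qFH γ (zs q.1) (zs q'.1) *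
        ((if q.2.2.1 = q'.2.2.1 ∧ q.2.2.2 = q'.2.2.2 then 1 else 0)
          + (if q.2.2.1 = q'.2.2.2 ∧ q.2.2.2 = q'.2.2.1 then 1 else 0))
  else 0

/-- The model after the orthogonal change of basis: the data matrix `X̃_n` has block form
`[[√n D_n + E₁₁, E₁₂], [E₂₁, √n Λ_n^{1/2}], [E₃₁, 0]]`, with all blocks mutually independent,
the `E`-blocks having iid `N(0,1)` entries and `n λ_{n,α}` the decreasingly ordered
eigenvalues of a white Wishart matrix of dimension `p − k` with `n − k` degrees of freedom.
(Monotonicity assumptions on `d` and `μ` are stated separately when needed.) -/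
structure BlockModel (k : ℕ) (γ : ℝ) (p : ℕ → ℕ) (Ω : Type*) [MeasurableSpace Ω]
    (P : Measure Ω) (μ : Fin k → ℝ) where
  d : ∀ n : ℕ, Ω → Fin k → ℝ
  E11 : ∀ n : ℕ, Ω → Matrix (Fin k) (Fin k) ℝ
  E12 : ∀ n : ℕ, Ω → Matrix (Fin k) (Fin (p n - k)) ℝ
  E21 : ∀ n : ℕ, Ω → Matrix (Fin (p n - k)) (Fin k) ℝ
  E31 : ∀ n : ℕ, Ω → Matrix (Fin (n - p n)) (Fin k) ℝ
  W : ∀ n : ℕ, Ω → Matrix (Fin (n - k)) (Fin (p n - k)) ℝ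
  lam : ∀ n : ℕ, Ω → Fin (p n - k) → ℝ
  aspect : Tendsto (fun n : ℕ => Real.sqrt n * ((n : ℝ) / (p n) - γ)) atTop (𝓝 0)
  pTop : Tendsto p atTop atTop
  dpos : ∀ n ω i, 0 < d n ω i
  dconv : ∀ᵐ ω ∂P, ∀ i, Tendsto (fun n => d n ω i) atTop (𝓝 (Real.sqrt (μ i)))
  E11gauss : ∀ n, IIDGaussian P (fun ω => matEntries (E11 n ω)) 1
  E12gauss : ∀ n, IIDGaussian P (fun ω => matEntries (E12 n ω)) 1
  E21gauss : ∀ n, IIDGaussian P (fun ω => matEntries (E21 n ω)) 1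
  E31gauss : ∀ n, IIDGaussian P (fun ω => matEntries (E31 n ω)) 1
  Wgauss : ∀ n, IIDGaussian P (fun ω => matEntries (W n ω)) 1
  lamEig : ∀ n ω, ∀ α : Fin (p n - k), (n : ℝ) * lam n ω α = ithEigDesc ((W n ω)ᵀ * W n ω) α
  indep1 : ∀ n, IndepFun (d n) (fun ω => (E11 n ω, E12 n ω, E21 n ω, E31 n ω, W n ω)) P
  indep2 : ∀ n, IndepFun (E11 n) (fun ω => (E12 n ω, E21 n ω, E31 n ω, W n ω)) P
  indep3 : ∀ n, IndepFun (E12 n) (fun ω => (E21 n ω, E31 n ω, W n ω)) P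
  indep4 : ∀ n, IndepFun (E21 n) (fun ω => (E31 n ω, W n ω)) P
  indep5 : ∀ n, IndepFun (E31 n) (W n) P

namespace BlockModel

variable {k : ℕ} {γ : ℝ} {p : ℕ → ℕ} {Ω : Type*} [MeasurableSpace Ω] {P : Measure Ω}
  {μ : Fin k → ℝ}

/-- Upper-left block `S_{n,11}` of `S_n = (1/n) X̃_nᵀ X̃_n`. -/
def S11 (M : BlockModel k γ p Ω P μ) (n : ℕ) (ω : Ω) : Matrix (Fin k) (Fin k) ℝ :=
  Matrix.diagonal (fun i => (M.d n ω i) ^ 2)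
    + (1 / Real.sqrt n) •
      (Matrix.diagonal (M.d n ω) * M.E11 n ω + (M.E11 n ω)ᵀ * Matrix.diagonal (M.d n ω))
    + (1 / (n : ℝ)) •
      ((M.E11 n ω)ᵀ * M.E11 n ω + (M.E21 n ω)ᵀ * M.E21 n ω + (M.E31 n ω)ᵀ * M.E31 n ω)

/-- Block `S_{n,12}` of `S_n = (1/n) X̃_nᵀ X̃_n`. -/
def S12 (M : BlockModel k γ p Ω P μ) (n : ℕ) (ω : Ω) : Matrix (Fin k) (Fin (p n - k)) ℝ :=
  (1 / Real.sqrt n) • (Matrix.diagonal (M.d n ω) * M.E12 n ω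
      + (M.E21 n ω)ᵀ * Matrix.diagonal (fun α => Real.sqrt (M.lam n ω α)))
    + (1 / (n : ℝ)) • ((M.E11 n ω)ᵀ * M.E12 n ω)

/-- Block `S_{n,21}` of `S_n = (1/n) X̃_nᵀ X̃_n`. -/
def S21 (M : BlockModel k γ p Ω P μ) (n : ℕ) (ω : Ω) : Matrix (Fin (p n - k)) (Fin k) ℝ :=
  (1 / Real.sqrt n) • ((M.E12 n ω)ᵀ * Matrix.diagonal (M.d n ω)
      + Matrix.diagonal (fun α => Real.sqrt (M.lam n ω α)) * M.E21 n ω)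
    + (1 / (n : ℝ)) • ((M.E12 n ω)ᵀ * M.E11 n ω)

/-- Lower-right block `S_{n,22}` of `S_n = (1/n) X̃_nᵀ X̃_n`. -/
def S22 (M : BlockModel k γ p Ω P μ) (n : ℕ) (ω : Ω) :
    Matrix (Fin (p n - k)) (Fin (p n - k)) ℝ :=
  Matrix.diagonal (M.lam n ω) + (1 / (n : ℝ)) • ((M.E12 n ω)ᵀ * M.E12 n ω)

/-- The secular-equation matrix `T_n(z) = S₁₁ − z I − S₁₂ (S₂₂ − z I)⁻¹ S₂₁`. -/
def T (M : BlockModel k γ p Ω P μ) (n : ℕ) (ω : Ω) (z : ℝ) : Matrix (Fin k) (Fin k) ℝ :=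
  M.S11 n ω - z • 1 - M.S12 n ω * (M.S22 n ω - z • 1)⁻¹ * M.S21 n ω

/-- `F_n(z)` in the block model. -/
def Fmat (M : BlockModel k γ p Ω P μ) (n : ℕ) (ω : Ω) (z : ℝ) : Matrix (Fin k) (Fin k) ℝ :=
  Real.sqrt n • ((1 / (n : ℝ)) •
      (M.E12 n ω * (Matrix.diagonal (M.lam n ω) - z • 1)⁻¹ * (M.E12 n ω)ᵀ)
    - (γ⁻¹ * mpStieltjes γ z) • 1)

/-- `G_n(z)` in the block model. -/
def Gmat (M : BlockModel k γ p Ω P μ) (n : ℕ) (ω : Ω) (z : ℝ) : Matrix (Fin k) (Fin k) ℝ :=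
  Real.sqrt n • ((1 / (n : ℝ)) •
    (M.E12 n ω * (Matrix.diagonal (M.lam n ω) - z • 1)⁻¹ *
      Matrix.diagonal (fun α => Real.sqrt (M.lam n ω α)) * M.E21 n ω))

/-- `H_n(z)` in the block model. -/
def Hmat (M : BlockModel k γ p Ω P μ) (n : ℕ) (ω : Ω) (z : ℝ) : Matrix (Fin k) (Fin k) ℝ :=
  Real.sqrt n • ((1 / (n : ℝ)) •
      ((M.E21 n ω)ᵀ * (Matrix.diagonal (M.lam n ω) - z • 1)⁻¹ * M.E21 n ω)
    - (γ⁻¹ * mpStieltjes γ z) • 1)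

/-- `R_n(z) = D_n + n^{-1/2} E₁₁ − n^{-1/2} E₁₂ (S₂₂ − z I)⁻¹ S₂₁`. -/
def Rmat (M : BlockModel k γ p Ω P μ) (n : ℕ) (ω : Ω) (z : ℝ) : Matrix (Fin k) (Fin k) ℝ :=
  Matrix.diagonal (M.d n ω) + (1 / Real.sqrt n) • M.E11 n ω
    - (1 / Real.sqrt n) • (M.E12 n ω * (M.S22 n ω - z • 1)⁻¹ * M.S21 n ω)

/-- Euclidean norm of `x̃ = (x; −(S₂₂ − z I)⁻¹ S₂₁ x)`. -/
def xtNorm (M : BlockModel k γ p Ω P μ) (n : ℕ) (ω : Ω) (z : ℝ) (x : Fin k → ℝ) : ℝ :=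
  Real.sqrt (∑ j, x j ^ 2 +
    ∑ α, ((((M.S22 n ω - z • 1)⁻¹ * M.S21 n ω) *ᵥ x) α) ^ 2)

/-- First `k` components of the left singular vector: `y = R_n(z) x / ‖x̃‖₂`. -/
def yvec (M : BlockModel k γ p Ω P μ) (n : ℕ) (ω : Ω) (z : ℝ) (x : Fin k → ℝ) :
    Fin k → ℝ :=
  (M.xtNorm n ω z x)⁻¹ • (M.Rmat n ω z *ᵥ x)

end BlockModel

/-- The deterministic limit `T₀(z) = (1 + γ⁻¹ m(z))⁻¹ D² + m(z)⁻¹ I` of `T_n(z)`. -/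
def T0lim {k : ℕ} (γ : ℝ) (μ : Fin k → ℝ) (z : ℝ) : Matrix (Fin k) (Fin k) ℝ :=
  (1 + γ⁻¹ * mpStieltjes γ z)⁻¹ • Matrix.diagonal μ + (mpStieltjes γ z)⁻¹ • 1

/-! ### Standard Gaussian arrays -/

/-- The standard Gaussian measure on `ι → ℝ`. -/
abbrev gPi (ι : Type*) [Fintype ι] : Measure (ι → ℝ) :=
  Measure.pi fun _ : ι => gaussianReal 0 1

/-- Rotation invariance of the standard Gaussian measure. -/
theorem gPi_measurePreserving_of_isometry {ι : Type*} [Fintype ι]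
    (T : (ι → ℝ) →ₗ[ℝ] (ι → ℝ)) (hT : ∀ x, T x ⬝ᵥ T x = x ⬝ᵥ x) :
    MeasurePreserving T (gPi ι) (gPi ι) := by
  classical
  let L : EuclideanSpace ℝ ι →ₗᵢ[ℝ] EuclideanSpace ℝ ι :=
    { toLinearMap := (WithLp.linearEquiv 2 ℝ (ι → ℝ)).symm.toLinearMap ∘ₗ T ∘ₗ
        (WithLp.linearEquiv 2 ℝ (ι → ℝ)).toLinearMap
      norm_map' := by
        intro x
        have := hT (WithLp.ofLp x)
        simp only [EuclideanSpace.norm_eq, Real.norm_eq_abs, sq_abs]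
        congr 1
        simpa [dotProduct, ← pow_two] using this }
  let Le := L.toLinearIsometryEquiv rfl
  have hTm : Measurable T := (LinearMap.continuous_of_finiteDimensional T).measurable
  have h1 : (stdGaussian (EuclideanSpace ℝ ι)).map Le = stdGaussian (EuclideanSpace ℝ ι) :=
    stdGaussian_map Le
  have h2 : (gPi ι).map (WithLp.toLp 2) = stdGaussian (EuclideanSpace ℝ ι) := map_pi_eq_stdGaussian
  have hof : Measurable (WithLp.ofLp : EuclideanSpace ℝ ι → ι → ℝ) := by fun_prop
  have hto : Measurable (WithLp.toLp 2 : (ι → ℝ) → EuclideanSpace ℝ ι) := by fun_prop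
  refine ⟨hTm, ?_⟩
  have h3 : (stdGaussian (EuclideanSpace ℝ ι)).map WithLp.ofLp = gPi ι := by
    rw [← h2, Measure.map_map hof hto]
    exact Measure.map_id
  have hL : Measurable Le := Le.continuous.measurable
  rw [← h2, Measure.map_map hL hto] at h1
  have h4 := congrArg (fun μ => Measure.map WithLp.ofLp μ) h1
  simp only at h4
  rw [Measure.map_map hof (hL.comp hto), Measure.map_map hof hto] at h4
  have e1 : (WithLp.ofLp ∘ (Le ∘ WithLp.toLp 2) : (ι → ℝ) → (ι → ℝ)) = T := by
    funext x; rfl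
  have e2 : (WithLp.ofLp ∘ WithLp.toLp 2 : (ι → ℝ) → (ι → ℝ)) = id := by
    funext x; rfl
  rw [e1, e2, Measure.map_id] at h4
  exact h4

/-- An array of independent standard Gaussians, split along `e`, is a pair of independent such arrays. -/
theorem gPi_split {ι κ l : Type*} [Fintype ι] [Fintype κ] [Fintype l] (e : ι ≃ κ ⊕ l) :
    MeasurePreserving (fun (q : (κ → ℝ) × (l → ℝ)) (i : ι) => Sum.elim q.1 q.2 (e i))
      ((gPi κ).prod (gPi l)) (gPi ι) := by
  have h1 := measurePreserving_sumPiEquivProdPi_symm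
    (fun _ : κ ⊕ l => gaussianReal 0 1)
  have h2 := measurePreserving_piCongrLeft (fun _ : ι => gaussianReal 0 1) e.symm
  have h3 := h2.comp h1
  convert h3 using 1
  funext q i
  obtain ⟨s, rfl⟩ := e.symm.surjective i
  simp only [Function.comp, MeasurableEquiv.coe_piCongrLeft, Equiv.piCongrLeft_apply_apply]
  cases s <;> simp [MeasurableEquiv.sumPiEquivProdPi, Equiv.sumPiEquivProdPi]

theorem gaussian_sq_integral {t : ℝ} (ht : t < 1 / 2) :
    Integrable (fun x : ℝ => Real.exp (t * (x ^ 2 - 1))) (gaussianReal 0 1) ∧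
    ∫ x, Real.exp (t * (x ^ 2 - 1)) ∂(gaussianReal 0 1)
      = Real.exp (-t) * (Real.sqrt (1 - 2 * t))⁻¹ := by
  have hpos : 0 < 1 / 2 - t := by linarith
  have hfun : (fun x : ℝ => gaussianPDFReal 0 1 x • Real.exp (t * (x ^ 2 - 1)))
      = fun x => (Real.exp (-t) * (Real.sqrt (2 * Real.pi))⁻¹) * Real.exp (-(1 / 2 - t) * x ^ 2) := by
    funext x
    simp only [gaussianPDFReal, NNReal.coe_one, mul_one, smul_eq_mul, sub_zero]
    rw [mul_comm (Real.exp (-t)), mul_assoc, mul_assoc, ← Real.exp_add, ← Real.exp_add]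
    congr 2; ring
  constructor
  · rw [gaussianReal_of_var_ne_zero 0 one_ne_zero,
      integrable_withDensity_iff_integrable_smul₀' (by fun_prop) (by simp [gaussianPDF])]
    have : (fun x : ℝ => (gaussianPDF 0 1 x).toReal • Real.exp (t * (x ^ 2 - 1)))
      = fun x => (Real.exp (-t) * (Real.sqrt (2 * Real.pi))⁻¹) * Real.exp (-(1 / 2 - t) * x ^ 2) := by
      rw [← hfun]; funext x; rw [toReal_gaussianPDF]
    rw [this]
    exact (integrable_exp_neg_mul_sq hpos).const_mul _
  · rw [integral_gaussianReal_eq_integral_smul one_ne_zero, hfun, integral_const_mul,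
      integral_gaussian, mul_assoc]
    congr 1
    rw [← Real.sqrt_inv, ← Real.sqrt_inv, ← Real.sqrt_mul (by positivity)]
    congr 1
    have : (1 - 2 * t) ≠ 0 := by linarith
    have : (1 / 2 - t) ≠ 0 := hpos.ne'
    have := Real.pi_pos.ne'
    have e : 1 - 2 * t = 2 * (1 / 2 - t) := by ring
    rw [e]
    field_simp

/-- A centred squared Gaussian is sub-exponential. -/
theorem gaussian_sq_mgf_le {t : ℝ} (ht : |t| ≤ 1 / 4) :
    ∫ x, Real.exp (t * (x ^ 2 - 1)) ∂(gaussianReal 0 1) ≤ Real.exp (4 * t ^ 2) := by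
  obtain ⟨h1, h2⟩ := abs_le.1 ht
  rw [(gaussian_sq_integral (by linarith)).2]
  -- `exp (-2t - 8t²) ≤ 1 - 2t` is the bound `log (1 - u) ≥ -u - 2u²` with `u = 2t`.
  have key : Real.exp (-t - 4 * t ^ 2) ≤ Real.sqrt (1 - 2 * t) := by
    apply Real.le_sqrt_of_sq_le
    rw [← Real.exp_nat_mul]
    have hlog : 1 - 2 * t = Real.exp (Real.log (1 - 2 * t)) := by
      rw [Real.exp_log (by linarith)]
    rw [hlog]
    apply Real.exp_le_exp.2
    have hu : |2 * t| < 1 := by rw [abs_mul]; norm_num; linarith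
    have := Real.abs_log_sub_add_sum_range_le hu 1
    simp only [Finset.range_one, Finset.sum_singleton] at this
    have h3 := (abs_le.1 this).1
    have h4 : |2 * t| ^ (1 + 1) / (1 - |2 * t|) ≤ 2 * (2 * t) ^ 2 := by
      rw [div_le_iff₀ (by linarith), sq_abs]
      have : |2 * t| ≤ 1 / 2 := by rw [abs_mul]; norm_num; linarith
      nlinarith [sq_nonneg (2 * t)]
    norm_num at h3 h4 ⊢
    nlinarith
  have hs : 0 < Real.sqrt (1 - 2 * t) := Real.sqrt_pos.2 (by linarith)
  rw [← div_eq_mul_inv, div_le_iff₀ hs]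
  calc Real.exp (-t) = Real.exp (4 * t ^ 2) * Real.exp (-t - 4 * t ^ 2) := by
        rw [← Real.exp_add]; ring_nf
    _ ≤ _ := by gcongr

/-! ### Concentration of Gaussian quadratic forms -/

/-- Chernoff bound for a weighted sum of independent centred squared Gaussians. -/
theorem gPi_weighted_sq_upper {ι : Type*} [Fintype ι] (d : ι → ℝ) {D t r : ℝ}
    (hd : ∀ a, |d a| ≤ D) (ht : 0 ≤ t) (htD : t * D ≤ 1 / 4) :
    (gPi ι).real {g | r ≤ ∑ a, d a * (g a ^ 2 - 1)}
      ≤ Real.exp (4 * t ^ 2 * D ^ 2 * Fintype.card ι - t * r) := by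
  have hfun : (fun g : ι → ℝ => Real.exp (t * ∑ a, d a * (g a ^ 2 - 1)))
      = fun g => ∏ a, Real.exp ((t * d a) * (g a ^ 2 - 1)) := by
    funext g; rw [← Real.exp_sum, Finset.mul_sum]; simp only [mul_assoc]
  have hta : ∀ a, |t * d a| ≤ 1 / 4 := fun a => by
    rw [abs_mul, abs_of_nonneg ht]
    exact (mul_le_mul_of_nonneg_left (hd a) ht).trans htD
  have h_int : Integrable (fun g : ι → ℝ => Real.exp (t * ∑ a, d a * (g a ^ 2 - 1))) (gPi ι) := by
    rw [hfun]
    exact Integrable.fintype_prod (f := fun a (x : ℝ) => Real.exp ((t * d a) * (x ^ 2 - 1)))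
      fun a => (gaussian_sq_integral (by linarith [(abs_le.1 (hta a)).2])).1
  refine (measure_ge_le_exp_mul_mgf r ht h_int).trans ?_
  have hm : mgf (fun g : ι → ℝ => ∑ a, d a * (g a ^ 2 - 1)) (gPi ι) t
      ≤ Real.exp (4 * t ^ 2 * D ^ 2 * Fintype.card ι) := by
    rw [mgf, hfun]
    rw [integral_fintype_prod_eq_prod
      (f := fun a (x : ℝ) => Real.exp ((t * d a) * (x ^ 2 - 1)))]
    calc _ ≤ ∏ _a : ι, Real.exp (4 * t ^ 2 * D ^ 2) := by
          refine Finset.prod_le_prod (fun a _ => integral_nonneg fun x => (Real.exp_pos _).le) ?_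
          intro a _
          refine (gaussian_sq_mgf_le (hta a)).trans (Real.exp_le_exp.2 ?_)
          have : d a ^ 2 ≤ D ^ 2 := sq_le_sq' (by linarith [(abs_le.1 (hd a)).1]) (abs_le.1 (hd a)).2
          rw [mul_pow]; nlinarith [sq_nonneg t]
      _ = _ := by rw [Finset.prod_const, ← Real.exp_nat_mul, Finset.card_univ]; ring_nf
  calc _ ≤ Real.exp (-t * r) * Real.exp (4 * t ^ 2 * D ^ 2 * Fintype.card ι) := by gcongr
    _ = _ := by rw [← Real.exp_add]; ring_nf

/-- Hanson–Wright type bound, with the exponent left in terms of the Chernoff parameter `t`. The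
spectral theorem and rotation invariance reduce it to a weighted sum of independent centred
squares. -/
theorem gPi_quadForm_conc {ι : Type*} [Fintype ι] [DecidableEq ι] (M : Matrix ι ι ℝ)
    (hM : M.IsHermitian) {D t r : ℝ}
    (hD : ∀ v : ι → ℝ, |v ⬝ᵥ (M *ᵥ v)| ≤ D * (v ⬝ᵥ v)) (ht : 0 ≤ t) (htD : t * D ≤ 1 / 4) :
    gPi ι {g | r ≤ |g ⬝ᵥ (M *ᵥ g) - M.trace|}
      ≤ ENNReal.ofReal (2 * Real.exp (4 * t ^ 2 * D ^ 2 * Fintype.card ι - t * r)) := by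
  set U : Matrix ι ι ℝ := (hM.eigenvectorUnitary : Matrix ι ι ℝ) with hU
  have hUU : Uᵀ * U = 1 := by
    have := Unitary.coe_star_mul_self hM.eigenvectorUnitary
    simpa [star_eq_conjTranspose] using this
  have hUU' : U * Uᵀ = 1 := by
    have := Unitary.coe_mul_star_self hM.eigenvectorUnitary
    simpa [star_eq_conjTranspose] using this
  have hspec : M = U * diagonal hM.eigenvalues * Uᵀ := by
    have := hM.spectral_theorem
    simpa [Unitary.conjStarAlgAut_apply, star_eq_conjTranspose, Function.comp_def] using this
  have hquad : ∀ v : ι → ℝ, v ⬝ᵥ (M *ᵥ v) = ∑ a, hM.eigenvalues a * ((Uᵀ *ᵥ v) a) ^ 2 := by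
    intro v
    conv_lhs => rw [hspec]
    rw [← mulVec_mulVec, ← mulVec_mulVec, dotProduct_mulVec, ← mulVec_transpose]
    simp only [dotProduct, mulVec_diagonal]
    refine Finset.sum_congr rfl fun a _ => by ring
  have htr : M.trace = ∑ a, hM.eigenvalues a := by
    simpa using hM.trace_eq_sum_eigenvalues
  have hev : ∀ a, |hM.eigenvalues a| ≤ D := by
    intro a
    have h := hD (U *ᵥ Pi.single a 1)
    rw [hquad] at h
    have e : Uᵀ *ᵥ (U *ᵥ Pi.single a 1) = Pi.single a 1 := by
      rw [mulVec_mulVec, hUU, one_mulVec]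
    have e2 : (U *ᵥ Pi.single a 1) ⬝ᵥ (U *ᵥ Pi.single a 1) = 1 := by
      rw [dotProduct_mulVec, ← mulVec_transpose, e]
      simp
    rw [e, e2] at h
    simpa [Pi.single_apply] using h
  have hrot : MeasurePreserving (Matrix.mulVecLin Uᵀ) (gPi ι) (gPi ι) := by
    refine gPi_measurePreserving_of_isometry _ fun x => ?_
    simp only [mulVecLin_apply]
    rw [dotProduct_mulVec, ← mulVec_transpose, transpose_transpose, mulVec_mulVec, hUU',
      one_mulVec]
  have hmeas : ∀ d : ι → ℝ, MeasurableSet {g : ι → ℝ | r ≤ ∑ a, d a * (g a ^ 2 - 1)} := fun d =>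
    measurableSet_le measurable_const (by fun_prop)
  have hsub : {g | r ≤ |g ⬝ᵥ (M *ᵥ g) - M.trace|} ⊆
      (Matrix.mulVecLin Uᵀ) ⁻¹' ({g | r ≤ ∑ a, hM.eigenvalues a * (g a ^ 2 - 1)} ∪
        {g | r ≤ ∑ a, (-hM.eigenvalues a) * (g a ^ 2 - 1)}) := by
    intro g hg
    have e : g ⬝ᵥ (M *ᵥ g) - M.trace = ∑ a, hM.eigenvalues a * ((Uᵀ *ᵥ g) a ^ 2 - 1) := by
      rw [hquad, htr, ← Finset.sum_sub_distrib]
      exact Finset.sum_congr rfl fun a _ => by ring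
    simp only [Set.mem_ofPred_eq] at hg
    rw [e] at hg
    rcases le_abs.1 hg with h | h
    · left; exact h
    · right
      simp only [Set.mem_ofPred_eq, mulVecLin_apply, neg_mul, Finset.sum_neg_distrib]
      exact h
  refine (measure_mono hsub).trans ?_
  rw [hrot.measure_preimage ((hmeas _).union (hmeas _)).nullMeasurableSet]
  refine (measure_union_le _ _).trans ?_
  have hb : ∀ d : ι → ℝ, (∀ a, |d a| ≤ D) → gPi ι {g | r ≤ ∑ a, d a * (g a ^ 2 - 1)}
      ≤ ENNReal.ofReal (Real.exp (4 * t ^ 2 * D ^ 2 * Fintype.card ι - t * r)) := fun d hd => by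
    have := gPi_weighted_sq_upper (r := r) d hd ht htD
    rw [measureReal_def] at this
    exact (ENNReal.le_ofReal_iff_toReal_le (measure_ne_top _ _) (Real.exp_pos _).le).2 this
  rw [two_mul, ENNReal.ofReal_add (Real.exp_pos _).le (Real.exp_pos _).le]
  exact add_le_add (hb _ hev) (hb _ fun a => by rw [abs_neg]; exact hev a)

/-- Linear-scale form of the quadratic form concentration: deviations of order `n` have
exponentially small probability, uniformly over matrices of norm at most `D` and dimension at most
`C n`. -/
theorem gPi_quadForm_exp {D C ε : ℝ} (hD0 : 0 < D) (hC : 0 < C) (hε : 0 < ε) :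
    ∃ c : ℝ, 0 < c ∧ ∀ (ι : Type) [Fintype ι] [DecidableEq ι] (n : ℕ) (M : Matrix ι ι ℝ),
      (Fintype.card ι : ℝ) ≤ C * n → M.IsHermitian →
      (∀ v : ι → ℝ, |v ⬝ᵥ (M *ᵥ v)| ≤ D * (v ⬝ᵥ v)) →
      gPi ι {g | ε * n ≤ |g ⬝ᵥ (M *ᵥ g) - M.trace|} ≤ ENNReal.ofReal (2 * Real.exp (-c * n)) := by
  set t := min (1 / (4 * D)) (ε / (8 * D ^ 2 * C)) with ht
  have ht0 : 0 < t := by rw [ht]; positivity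
  have h1 : t * D ≤ 1 / 4 := by
    have : t ≤ 1 / (4 * D) := min_le_left _ _
    calc t * D ≤ 1 / (4 * D) * D := by gcongr
      _ = _ := by field_simp
  have h2 : 8 * t * D ^ 2 * C ≤ ε := by
    have : t ≤ ε / (8 * D ^ 2 * C) := min_le_right _ _
    rw [le_div_iff₀ (by positivity)] at this
    linarith
  refine ⟨t * ε / 2, by positivity, fun ι _ _ n M hcard hM hMD => ?_⟩
  refine (gPi_quadForm_conc M hM hMD ht0.le h1).trans (ENNReal.ofReal_le_ofReal ?_)
  gcongr
  have h3 : 4 * t ^ 2 * D ^ 2 * (Fintype.card ι : ℝ) ≤ 4 * t ^ 2 * D ^ 2 * (C * n) := by gcongr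
  have h4 : t * n * (8 * t * D ^ 2 * C) ≤ t * n * ε := by gcongr
  nlinarith

/-! ### Gaussian matrices: sections and rotations -/

/-- The matrix with the given entries, inverse to `matEntries`. -/
def toMat {m n : Type*} (g : m × n → ℝ) : Matrix m n ℝ := Matrix.of fun i j => g (i, j)

theorem toMat_matEntries {m n : Type*} (A : Matrix m n ℝ) : toMat (matEntries A) = A := rfl

/-- Conditioning on the first coordinate: if, outside `A`, every section of `B` has probability at
most `η`, then `B` has probability at most that of `A` plus `η`. -/
theorem prod_measure_le_of_section {X Y : Type*} [MeasurableSpace X] [MeasurableSpace Y]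
    (μ : Measure X) (ν : Measure Y) [IsProbabilityMeasure μ] [IsProbabilityMeasure ν]
    {B : Set (X × Y)} (hB : MeasurableSet B) {A : Set X} (hA : MeasurableSet A) {η : ENNReal}
    (h : ∀ x ∉ A, ν (Prod.mk x ⁻¹' B) ≤ η) : (μ.prod ν) B ≤ μ A + η := by
  rw [Measure.prod_apply hB]
  calc ∫⁻ x, ν (Prod.mk x ⁻¹' B) ∂μ ≤ ∫⁻ x, (A.indicator 1 x + η) ∂μ := by
        refine lintegral_mono fun x => ?_
        by_cases hx : x ∈ A
        · simp only [hx, Set.indicator_of_mem, Pi.one_apply]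
          exact prob_le_one.trans le_self_add
        · simpa [hx] using h x hx
    _ = _ := by
        rw [lintegral_add_right _ measurable_const, lintegral_indicator_one hA]; simp

/-- Splitting off row `i` of a matrix index set. -/
def rowEquiv {n p : ℕ} (i : Fin (n + 1)) : Fin (n + 1) × Fin p ≃ Fin p ⊕ (Fin n × Fin p) where
  toFun q := Fin.insertNth (α := fun _ => Fin p ⊕ (Fin n × Fin p)) i (Sum.inl q.2)
    (fun a => Sum.inr (a, q.2)) q.1
  invFun := Sum.elim (fun j => (i, j)) (fun q => (i.succAbove q.1, q.2))
  left_inv q := by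
    obtain ⟨a, j⟩ := q
    refine Fin.succAboveCases i ?_ (fun a => ?_) a <;> simp
  right_inv s := by
    rcases s with j | ⟨a, j⟩ <;> simp

/-- Splitting off the first column of a matrix index set. -/
def colEquiv {n p : ℕ} : Fin n × Fin (p + 1) ≃ Fin n ⊕ (Fin n × Fin p) where
  toFun q := Fin.cases (motive := fun _ => Fin n ⊕ (Fin n × Fin p)) (Sum.inl q.1)
    (fun j => Sum.inr (q.1, j)) q.2
  invFun := Sum.elim (fun i => (i, 0)) (fun q => (q.1, q.2.succ))
  left_inv q := by
    obtain ⟨a, j⟩ := q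
    refine Fin.cases ?_ (fun j => ?_) j <;> simp
  right_inv s := by
    rcases s with j | ⟨a, j⟩ <;> simp

/-- Householder reflection sending `v` to a multiple of the first basis vector. -/
theorem exists_orthogonal_to_first {n : ℕ} (v : Fin (n + 1) → ℝ) :
    ∃ O : Matrix (Fin (n + 1)) (Fin (n + 1)) ℝ, Oᵀ * O = 1 ∧
      O *ᵥ v = Pi.single 0 (Real.sqrt (v ⬝ᵥ v)) := by
  set w : Fin (n + 1) → ℝ := Pi.single 0 (Real.sqrt (v ⬝ᵥ v)) with hw
  obtain ⟨u, hu⟩ : ∃ u, u = v - w := ⟨_, rfl⟩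
  have hvv : 0 ≤ v ⬝ᵥ v := by simpa using dotProduct_star_self_nonneg v
  have hww : w ⬝ᵥ w = v ⬝ᵥ v := by
    rw [hw, single_dotProduct]; simp [Real.mul_self_sqrt hvv]
  by_cases hu0 : u = 0
  · refine ⟨1, by simp, ?_⟩
    rw [one_mulVec]; exact sub_eq_zero.1 (hu ▸ hu0)
  have huu : u ⬝ᵥ u ≠ 0 := fun h => hu0 (dotProduct_self_eq_zero.1 h)
  have hmul : ∀ x, (1 - (2 / (u ⬝ᵥ u)) • vecMulVec u u) *ᵥ x = x - (2 * (u ⬝ᵥ x) / (u ⬝ᵥ u)) • u := by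
    intro x
    rw [sub_mulVec, one_mulVec, smul_mulVec, vecMulVec_mulVec]
    congr 1
    funext i; simp; ring
  refine ⟨1 - (2 / (u ⬝ᵥ u)) • vecMulVec u u, ?_, ?_⟩
  · have hsymm : (1 - (2 / (u ⬝ᵥ u)) • vecMulVec u u)ᵀ = 1 - (2 / (u ⬝ᵥ u)) • vecMulVec u u := by
      rw [transpose_sub, transpose_one, transpose_smul, transpose_vecMulVec]
    rw [hsymm]
    apply Matrix.ext_of_mulVec_single
    intro j
    rw [← mulVec_mulVec, hmul, hmul, one_mulVec]
    rw [dotProduct_sub, dotProduct_smul, smul_eq_mul, div_mul_cancel₀ _ huu]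
    funext i; simp; field_simp; ring
  · rw [hmul]
    have h1 : 2 * (u ⬝ᵥ v) = u ⬝ᵥ u := by
      have e1 : u ⬝ᵥ u = u ⬝ᵥ v - u ⬝ᵥ w := by
        rw [← dotProduct_sub, ← hu]
      have e2 : u ⬝ᵥ v = v ⬝ᵥ v - w ⬝ᵥ v := by rw [hu, sub_dotProduct]
      have e3 : u ⬝ᵥ w = v ⬝ᵥ w - w ⬝ᵥ w := by rw [hu, sub_dotProduct]
      rw [e1, e2, e3, hww, dotProduct_comm v w]; ring
    rw [h1, div_self huu, one_smul, hu]; abel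

theorem mulVec_dotProduct_self_of_orth {n : Type*} [Fintype n] [DecidableEq n] {O : Matrix n n ℝ}
    (hO : Oᵀ * O = 1) (x y : n → ℝ) : (O *ᵥ x) ⬝ᵥ (O *ᵥ y) = x ⬝ᵥ y := by
  rw [dotProduct_mulVec, ← mulVec_transpose, mulVec_mulVec, hO, one_mulVec]

theorem gPi_left_rot {n p : Type*} [Fintype n] [Fintype p] [DecidableEq n] {O : Matrix n n ℝ}
    (hO : Oᵀ * O = 1) :
    MeasurePreserving (fun g : n × p → ℝ => matEntries (O * toMat g)) (gPi (n × p))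
      (gPi (n × p)) := by
  let T : (n × p → ℝ) →ₗ[ℝ] (n × p → ℝ) :=
    { toFun := fun g => matEntries (O * toMat g)
      map_add' := fun g h => by
        funext q; simp [matEntries, toMat, mul_apply, mul_add, Finset.sum_add_distrib]
      map_smul' := fun c g => by
        funext q; simp only [matEntries, toMat, mul_apply, of_apply, Pi.smul_apply, smul_eq_mul,
          Finset.mul_sum, RingHom.id_apply]
        exact Finset.sum_congr rfl fun _ _ => by ring }
  refine gPi_measurePreserving_of_isometry T fun g => ?_
  have key : ∀ h : n × p → ℝ, h ⬝ᵥ h = ∑ j, (fun i => h (i, j)) ⬝ᵥ (fun i => h (i, j)) := by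
    intro h; simp only [dotProduct]; rw [Fintype.sum_prod_type, Finset.sum_comm]
  rw [key, key]
  refine Finset.sum_congr rfl fun j _ => ?_
  exact mulVec_dotProduct_self_of_orth hO (fun i => g (i, j)) (fun i => g (i, j))

theorem gPi_right_rot {n p : Type*} [Fintype n] [Fintype p] [DecidableEq p] {O : Matrix p p ℝ}
    (hO : Oᵀ * O = 1) :
    MeasurePreserving (fun g : n × p → ℝ => matEntries (toMat g * Oᵀ)) (gPi (n × p))
      (gPi (n × p)) := by
  let T : (n × p → ℝ) →ₗ[ℝ] (n × p → ℝ) :=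
    { toFun := fun g => matEntries (toMat g * Oᵀ)
      map_add' := fun g h => by
        funext q; simp [matEntries, toMat, mul_apply, add_mul, Finset.sum_add_distrib]
      map_smul' := fun c g => by
        funext q; simp only [matEntries, toMat, mul_apply, of_apply, Pi.smul_apply, smul_eq_mul,
          Finset.mul_sum, RingHom.id_apply]
        exact Finset.sum_congr rfl fun _ _ => by ring }
  refine gPi_measurePreserving_of_isometry T fun g => ?_
  have key : ∀ h : n × p → ℝ, h ⬝ᵥ h = ∑ i, (fun j => h (i, j)) ⬝ᵥ (fun j => h (i, j)) := by
    intro h; simp only [dotProduct]; rw [Fintype.sum_prod_type]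
  rw [key, key]
  refine Finset.sum_congr rfl fun i _ => ?_
  have := mulVec_dotProduct_self_of_orth hO (fun j => g (i, j)) (fun j => g (i, j))
  rw [← this]
  congr 1 <;>
  · funext j
    simp only [T, LinearMap.coe_mk, AddHom.coe_mk, matEntries, toMat, mul_apply, of_apply,
      transpose_apply, mulVec, dotProduct]
    exact Finset.sum_congr rfl fun _ _ => by ring

/-! ### Upper edge of Gaussian matrices -/

/-- The matrices `G` for which `‖G y‖² + (β² + α β) ⟨e, y⟩² ≤ (α + β)² ‖y‖²` for all `y`; in
particular their operator norm is at most `α + β`. The extra term makes the condition stable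
under adjoining one row and one column. -/
def edgeSet (n p : ℕ) (α β : ℝ) (e : Fin p → ℝ) : Set (Fin n × Fin p → ℝ) :=
  {g | ∀ y : Fin p → ℝ, (toMat g *ᵥ y) ⬝ᵥ (toMat g *ᵥ y) + (β ^ 2 + α * β) * (e ⬝ᵥ y) ^ 2
    ≤ (α + β) ^ 2 * (y ⬝ᵥ y)}

theorem measurableSet_edge_joint (n p : ℕ) (α β : ℝ) :
    MeasurableSet {q : (Fin p → ℝ) × (Fin n × Fin p → ℝ) | q.2 ∉ edgeSet n p α β (β⁻¹ • q.1)} := by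
  have : IsClosed {q : (Fin p → ℝ) × (Fin n × Fin p → ℝ) | q.2 ∈ edgeSet n p α β (β⁻¹ • q.1)} := by
    have : {q : (Fin p → ℝ) × (Fin n × Fin p → ℝ) | q.2 ∈ edgeSet n p α β (β⁻¹ • q.1)} =
        ⋂ y : Fin p → ℝ, {q | (toMat q.2 *ᵥ y) ⬝ᵥ (toMat q.2 *ᵥ y)
          + (β ^ 2 + α * β) * ((β⁻¹ • q.1) ⬝ᵥ y) ^ 2 ≤ (α + β) ^ 2 * (y ⬝ᵥ y)} := by
      ext q; simp [edgeSet]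
    rw [this]
    refine isClosed_iInter fun y => isClosed_le ?_ continuous_const
    simp only [toMat, mulVec, dotProduct, of_apply, Pi.smul_apply]
    fun_prop
  exact this.measurableSet.compl

theorem measurableSet_edge (n p : ℕ) (α β : ℝ) (e : Fin p → ℝ) :
    MeasurableSet (edgeSet n p α β e)ᶜ := by
  have : IsClosed (edgeSet n p α β e) := by
    simp only [edgeSet, Set.ofPred_forall]
    refine isClosed_iInter fun y => isClosed_le ?_ continuous_const
    simp only [toMat, mulVec, dotProduct, of_apply]
    fun_prop
  exact this.measurableSet.compl

theorem measurableSet_normSq_gt {ι : Type*} [Fintype ι] (a : ℝ) :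
    MeasurableSet {x : ι → ℝ | a < x ⬝ᵥ x} := by
  refine measurableSet_lt measurable_const ?_
  simp only [dotProduct]; fun_prop

theorem dotProduct_self_nonneg' {ι : Type*} [Fintype ι] (v : ι → ℝ) : 0 ≤ v ⬝ᵥ v := by
  simpa using dotProduct_star_self_nonneg v

theorem dotProduct_sq_le {ι : Type*} [Fintype ι] (v w : ι → ℝ) :
    (v ⬝ᵥ w) ^ 2 ≤ (v ⬝ᵥ v) * (w ⬝ᵥ w) := by
  have := Finset.sum_mul_sq_le_sq_mul_sq Finset.univ v w
  simpa only [dotProduct, ← pow_two] using this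

/-- Block computation behind the induction step: bordering a matrix of `edgeSet n p` by a row
`r` and a column `w` of norm at most `α`, seen after the rotation `O` that aligns `w` with the first
basis vector, gives a matrix satisfying the bound one size up. -/
theorem edge_step_mem {n p : ℕ} {α β : ℝ} (hβ : 0 < β) (w : Fin (n + 1) → ℝ)
    (h : Fin (n + 1) × Fin p → ℝ) {O : Matrix (Fin (n + 1)) (Fin (n + 1)) ℝ} (hO : Oᵀ * O = 1)
    (hOw : O *ᵥ w = Pi.single 0 (Real.sqrt (w ⬝ᵥ w))) (hw : Real.sqrt (w ⬝ᵥ w) ≤ α)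
    (r : Fin p → ℝ) (u : Fin n × Fin p → ℝ)
    (hr0 : ∀ j, (O * toMat h) 0 j = r j) (hru : ∀ i j, (O * toMat h) (Fin.succ i) j = u (i, j))
    (hu : u ∈ edgeSet n p α β (β⁻¹ • r)) :
    (fun i => Sum.elim w h (colEquiv i)) ∈ edgeSet (n + 1) (p + 1) α β (Pi.single 0 1) := by
  intro y
  set G := toMat fun i => Sum.elim w h (colEquiv i)
  have e1 : G *ᵥ y = y 0 • w + toMat h *ᵥ (fun j => y (Fin.succ j)) := by
    funext i
    simp only [mulVec, dotProduct, Fin.sum_univ_succ, G, toMat, of_apply, colEquiv,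
      Equiv.coe_fn_mk, Fin.cases_zero, Fin.cases_succ, Sum.elim_inl, Sum.elim_inr, Pi.add_apply,
      Pi.smul_apply, smul_eq_mul]
    ring
  set y' : Fin p → ℝ := fun j => y (Fin.succ j)
  set s := Real.sqrt (w ⬝ᵥ w)
  have e2 : (G *ᵥ y) ⬝ᵥ (G *ᵥ y)
      = (y 0 * s + r ⬝ᵥ y') ^ 2 + (toMat u *ᵥ y') ⬝ᵥ (toMat u *ᵥ y') := by
    rw [← mulVec_dotProduct_self_of_orth hO]
    have e3 : O *ᵥ (G *ᵥ y) = Fin.cons (y 0 * s + r ⬝ᵥ y') (toMat u *ᵥ y') := by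
      rw [e1, mulVec_add, mulVec_smul, hOw, mulVec_mulVec]
      funext i
      refine Fin.cases ?_ (fun i => ?_) i
      · simp [mulVec, hr0, dotProduct]
      · simp only [Pi.add_apply, mulVec, dotProduct, hru, Fin.cons_succ]
        simp [Fin.succ_ne_zero, toMat]
    rw [e3]
    simp only [dotProduct, Fin.sum_univ_succ, Fin.cons_zero, Fin.cons_succ]
    ring
  have e4 : y ⬝ᵥ y = y 0 ^ 2 + y' ⬝ᵥ y' := by
    simp only [dotProduct, Fin.sum_univ_succ, y']; ring
  have e5 : (Pi.single 0 1 : Fin (p + 1) → ℝ) ⬝ᵥ y = y 0 := by simp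
  have hs : 0 ≤ s := Real.sqrt_nonneg _
  have hu' := hu y'
  rw [smul_dotProduct, smul_eq_mul] at hu'
  set t := β⁻¹ * (r ⬝ᵥ y') with ht
  have hrt : r ⬝ᵥ y' = β * t := by rw [ht]; field_simp
  rw [e2, e4, e5, hrt]
  have f1 : s ^ 2 * y 0 ^ 2 ≤ α ^ 2 * y 0 ^ 2 := by gcongr
  have f2 : 2 * (s * β) * (y 0 * t) ≤ (s * β) * (y 0 ^ 2 + t ^ 2) := by
    nlinarith [mul_nonneg (mul_nonneg hs hβ.le) (sq_nonneg (y 0 - t))]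
  have f3 : (s * β) * (y 0 ^ 2 + t ^ 2) ≤ (α * β) * (y 0 ^ 2 + t ^ 2) := by gcongr
  nlinarith

/-- Probability bound for the edge event, by induction on the number `n` of rows. Rotating on the
right sends `e` to a multiple of the first basis vector; rotating on the left then sends the first
column to a multiple of the first basis vector. What remains after peeling off the first column
and the first row `r` is a Gaussian matrix independent of `r`, to which the induction hypothesis
applies with `e = β⁻¹ r`. Each step loses the probability that the peeled column or row is too
long. -/
theorem edge_bound {α β : ℝ} (hα : 0 ≤ α) (hβ : 0 < β) {δ : ENNReal} (n : ℕ) : ∀ (p : ℕ)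
    (_ : ∀ n' ≤ n, gPi (Fin n') {x | α ^ 2 < x ⬝ᵥ x} ≤ δ)
    (_ : ∀ p' ≤ p, gPi (Fin p') {x | β ^ 2 < x ⬝ᵥ x} ≤ δ) (e : Fin p → ℝ) (_ : e ⬝ᵥ e ≤ 1),
    gPi (Fin n × Fin p) (edgeSet n p α β e)ᶜ ≤ n * (2 * δ) := by
  induction n with
  | zero =>
    intro p _ _ e he
    have : edgeSet 0 p α β e = Set.univ := by
      refine Set.eq_univ_of_forall fun g y => ?_
      have h1 := dotProduct_sq_le e y
      have h2 := dotProduct_self_nonneg' y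
      have h3 : (e ⬝ᵥ y) ^ 2 ≤ y ⬝ᵥ y := by nlinarith
      have h4 : (toMat g *ᵥ y) ⬝ᵥ (toMat g *ᵥ y) = 0 := by simp [dotProduct]
      rw [h4]
      have h5 : (β ^ 2 + α * β) * (e ⬝ᵥ y) ^ 2 ≤ (β ^ 2 + α * β) * (y ⬝ᵥ y) := by gcongr
      nlinarith [mul_nonneg hα hβ.le, mul_nonneg (mul_nonneg hα hβ.le) h2,
        mul_nonneg (mul_nonneg hα hα) h2]
    simp [this]
  | succ n ih =>
    intro p h1 h2 e he
    rcases p with _ | p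
    · have : edgeSet (n + 1) 0 α β e = Set.univ := by
        refine Set.eq_univ_of_forall fun g y => ?_
        simp [mulVec, dotProduct]
      simp [this]
    have step : ∀ w : Fin (n + 1) → ℝ, w ∉ {x : Fin (n + 1) → ℝ | α ^ 2 < x ⬝ᵥ x} →
        gPi (Fin (n + 1) × Fin p) {h | (fun i => Sum.elim w h (colEquiv i)) ∉
          edgeSet (n + 1) (p + 1) α β (Pi.single 0 1)} ≤ δ + n * (2 * δ) := by
      intro w hw
      have hw' : Real.sqrt (w ⬝ᵥ w) ≤ α := by
        rw [Real.sqrt_le_left hα]; simpa using hw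
      obtain ⟨O, hO, hOw⟩ := exists_orthogonal_to_first w
      set Bad : Set ((Fin p → ℝ) × (Fin n × Fin p → ℝ)) :=
        {q | q.2 ∉ edgeSet n p α β (β⁻¹ • q.1)} with hBad
      have hBm : MeasurableSet Bad := measurableSet_edge_joint n p α β
      let φ : (Fin (n + 1) × Fin p → ℝ) → (Fin p → ℝ) × (Fin n × Fin p → ℝ) :=
        fun h => (fun j => h (0, j), fun q => h (Fin.succ q.1, q.2))
      have hφ : Measurable φ := by
        refine Measurable.prodMk ?_ ?_ <;> exact measurable_pi_lambda _ fun _ => measurable_pi_apply _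
      have hsub : {h | (fun i => Sum.elim w h (colEquiv i)) ∉
          edgeSet (n + 1) (p + 1) α β (Pi.single 0 1)} ⊆
          (fun g => matEntries (O * toMat g)) ⁻¹' (φ ⁻¹' Bad) := by
        intro h hh hq
        by_contra hb
        refine hh (edge_step_mem hβ w h hO hOw hw' (φ (matEntries (O * toMat h))).1
          (φ (matEntries (O * toMat h))).2 (fun _ => rfl) (fun _ _ => rfl) hq)
      refine (measure_mono hsub).trans ?_
      rw [(gPi_left_rot hO).measure_preimage (hφ hBm).nullMeasurableSet,
        ← (gPi_split (rowEquiv (p := p) (0 : Fin (n + 1)))).measure_preimage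
          (hφ hBm).nullMeasurableSet]
      have hid : (fun (q : (Fin p → ℝ) × (Fin n × Fin p → ℝ)) i =>
          Sum.elim q.1 q.2 (rowEquiv (0 : Fin (n + 1)) i)) ⁻¹' (φ ⁻¹' Bad) = Bad := by
        ext q
        have : φ (fun i => Sum.elim q.1 q.2 (rowEquiv (0 : Fin (n + 1)) i)) = q := by
          refine Prod.ext ?_ ?_
          · funext j; simp [φ, rowEquiv]
          · funext ⟨a, j⟩
            have := Fin.insertNth_apply_succAbove (α := fun _ => Fin p ⊕ (Fin n × Fin p)) 0 (Sum.inl j)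
              (fun a => Sum.inr (a, j)) a
            simp only [Fin.succAbove_zero] at this
            simp [φ, rowEquiv]
        simp only [Set.mem_preimage, this]
      rw [hid]
      refine (prod_measure_le_of_section _ _ hBm (measurableSet_normSq_gt (β ^ 2))
        (η := n * (2 * δ)) ?_).trans ?_
      · intro r hr
        have hr' : r ⬝ᵥ r ≤ β ^ 2 := by simpa using hr
        have hsec : Prod.mk r ⁻¹' Bad = (edgeSet n p α β (β⁻¹ • r))ᶜ := rfl
        rw [hsec]
        refine ih p (fun n' hn' => h1 n' (Nat.le_succ_of_le hn'))
          (fun p' hp' => h2 p' (Nat.le_succ_of_le hp')) _ ?_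
        rw [smul_dotProduct, dotProduct_smul, smul_eq_mul, smul_eq_mul, ← mul_assoc, ← mul_inv,
          ← pow_two, inv_mul_le_iff₀ (by positivity)]
        simpa using hr'
      · gcongr
        exact h2 p (Nat.le_succ p)
    have first : gPi (Fin (n + 1) × Fin (p + 1)) (edgeSet (n + 1) (p + 1) α β (Pi.single 0 1))ᶜ
        ≤ δ + (δ + n * (2 * δ)) := by
      have hm := measurableSet_edge (n + 1) (p + 1) α β (Pi.single 0 1)
      rw [← (gPi_split (colEquiv (n := n + 1) (p := p))).measure_preimage hm.nullMeasurableSet]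
      refine (prod_measure_le_of_section _ _
        ((gPi_split (colEquiv (n := n + 1) (p := p))).measurable hm)
        (measurableSet_normSq_gt (α ^ 2)) step).trans ?_
      gcongr
      exact h1 (n + 1) le_rfl
    obtain ⟨O, hO, hOe⟩ := exists_orthogonal_to_first e
    have hsub : (edgeSet (n + 1) (p + 1) α β e)ᶜ ⊆ (fun g => matEntries (toMat g * Oᵀ)) ⁻¹'
        (edgeSet (n + 1) (p + 1) α β (Pi.single 0 1))ᶜ := by
      intro g hg hq
      refine hg fun y => ?_
      have h3 := hq (O *ᵥ y)
      rw [toMat_matEntries, mulVec_mulVec, Matrix.mul_assoc, hO, Matrix.mul_one,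
        mulVec_dotProduct_self_of_orth hO] at h3
      have h4 : e ⬝ᵥ y = Real.sqrt (e ⬝ᵥ e) * ((Pi.single 0 1 : Fin (p + 1) → ℝ) ⬝ᵥ (O *ᵥ y)) := by
        rw [← mulVec_dotProduct_self_of_orth hO, hOe]; simp
      refine le_trans ?_ h3
      rw [h4, mul_pow, Real.sq_sqrt (dotProduct_self_nonneg' e)]
      gcongr
      exact mul_le_of_le_one_left (sq_nonneg _) he
    refine (measure_mono hsub).trans ?_
    rw [(gPi_right_rot hO).measure_preimage (measurableSet_edge _ _ _ _ _).nullMeasurableSet]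
    refine first.trans (le_of_eq ?_)
    push_cast; ring

/-- The matrices `G` with `‖G y‖² ≤ b ‖y‖²` for all `y`. -/
def goodSet (n p : ℕ) (b : ℝ) : Set (Fin n × Fin p → ℝ) :=
  {g | ∀ y : Fin p → ℝ, (toMat g *ᵥ y) ⬝ᵥ (toMat g *ᵥ y) ≤ b * (y ⬝ᵥ y)}

theorem measurableSet_good (n p : ℕ) (b : ℝ) : MeasurableSet (goodSet n p b) := by
  have : IsClosed (goodSet n p b) := by
    simp only [goodSet, Set.ofPred_forall]
    refine isClosed_iInter fun y => isClosed_le ?_ continuous_const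
    simp only [toMat, mulVec, dotProduct, of_apply]
    fun_prop
  exact this.measurableSet

theorem goodSet_mono {n p : ℕ} {b b' : ℝ} (h : b ≤ b') : goodSet n p b ⊆ goodSet n p b' :=
  fun _ hg y => (hg y).trans (mul_le_mul_of_nonneg_right h (dotProduct_self_nonneg' y))

/-- Non-asymptotic upper edge: with overwhelming probability the largest eigenvalue of
`n⁻¹ Wᵀ W` stays below any `b > (1 + √ρ)²`. -/
theorem wishart_edge {ρ b : ℝ} (hρ : 0 < ρ) (hb : (1 + Real.sqrt ρ) ^ 2 < b) :
    ∃ ρ' c : ℝ, ρ < ρ' ∧ 0 < c ∧ ∀ n N p : ℕ, 1 ≤ n → N ≤ n → (p : ℝ) ≤ ρ' * n →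
      gPi (Fin N × Fin p) (goodSet N p (n * b))ᶜ ≤ ENNReal.ofReal (4 * n * Real.exp (-c * n)) := by
  have hcont : ContinuousAt (fun ε : ℝ => (Real.sqrt (1 + ε) + Real.sqrt (ρ + 2 * ε)) ^ 2) 0 := by
    fun_prop
  have hev : ∀ᶠ ε in 𝓝[>] (0 : ℝ), (Real.sqrt (1 + ε) + Real.sqrt (ρ + 2 * ε)) ^ 2 < b := by
    refine nhdsWithin_le_nhds (hcont.eventually_lt continuousAt_const ?_)
    simpa using hb
  obtain ⟨ε, hεb, hε⟩ := (hev.and self_mem_nhdsWithin).exists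
  replace hε : 0 < ε := hε
  obtain ⟨c, hc, hexp⟩ := gPi_quadForm_exp (D := 1) (C := max 1 (ρ + ε)) (ε := ε) one_pos
    (lt_max_of_lt_left one_pos) hε
  refine ⟨ρ + ε, c, by linarith, hc, fun n N p hn hN hp => ?_⟩
  have hn0 : (0 : ℝ) < n := by exact_mod_cast hn
  -- chi-square tail for vectors of length at most `(ρ + ε) n` resp. `n`
  have chi : ∀ (m : ℕ) (τ : ℝ), τ ≤ max 1 (ρ + ε) → (m : ℝ) ≤ τ * n → ∀ a, a = n * (τ + ε) →
      gPi (Fin m) {x | a < x ⬝ᵥ x} ≤ ENNReal.ofReal (2 * Real.exp (-c * n)) := by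
    intro m τ hτ hm a ha
    refine le_trans (measure_mono fun x hx => ?_) (hexp (Fin m) n 1 ?_ isHermitian_one ?_)
    · simp only [Set.mem_ofPred_eq, one_mulVec, trace_one, Fintype.card_fin] at hx ⊢
      refine le_trans ?_ (le_abs_self _)
      rw [ha] at hx; nlinarith
    · simp only [Fintype.card_fin]
      exact hm.trans (by gcongr)
    · intro v; rw [one_mulVec, one_mul, abs_of_nonneg (dotProduct_self_nonneg' v)]
  set α := Real.sqrt (n * (1 + ε)) with hα
  set β := Real.sqrt (n * (ρ + 2 * ε)) with hβ
  have hα2 : α ^ 2 = n * (1 + ε) := Real.sq_sqrt (by positivity)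
  have hβ2 : β ^ 2 = n * (ρ + ε + ε) := by rw [hβ, Real.sq_sqrt (by positivity)]; ring
  have hsum : (α + β) ^ 2 ≤ n * b := by
    have : α + β = Real.sqrt n * (Real.sqrt (1 + ε) + Real.sqrt (ρ + 2 * ε)) := by
      rw [hα, hβ, Real.sqrt_mul hn0.le, Real.sqrt_mul hn0.le]; ring
    rw [this, mul_pow, Real.sq_sqrt hn0.le]
    gcongr
  have key := edge_bound (δ := ENNReal.ofReal (2 * Real.exp (-c * n))) (Real.sqrt_nonneg _ : 0 ≤ α)
    (Real.sqrt_pos.2 (by positivity) : 0 < β) N p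
    (fun n' hn' => chi n' 1 (le_max_left _ _) (by
      rw [one_mul]; exact_mod_cast hn'.trans hN) _ hα2)
    (fun p' hp' => chi p' (ρ + ε) (le_max_right _ _)
      (le_trans (by exact_mod_cast hp') hp) _ hβ2) 0 (by simp)
  have hsub : (goodSet N p (n * b))ᶜ ⊆ (edgeSet N p α β 0)ᶜ := by
    refine Set.compl_subset_compl.2 fun g hg y => ?_
    have := hg y
    simp only [zero_dotProduct, ne_eq, OfNat.ofNat_ne_zero, not_false_eq_true, zero_pow, mul_zero,
      add_zero] at this
    exact this.trans (mul_le_mul_of_nonneg_right hsum (dotProduct_self_nonneg' y))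
  refine (measure_mono hsub).trans (key.trans ?_)
  have : ENNReal.ofReal (4 * n * Real.exp (-c * n))
      = n * (2 * ENNReal.ofReal (2 * Real.exp (-c * n))) := by
    rw [← ENNReal.ofReal_natCast n, ← ENNReal.ofReal_ofNat 2, ← ENNReal.ofReal_mul (by norm_num),
      ← ENNReal.ofReal_mul (by positivity)]
    congr 1; ring
  rw [this]
  gcongr

/-! ### Resolvents and leave-one-out identities -/

section PosMatrix
variable {ι : Type*} [Fintype ι] [DecidableEq ι] {S : Matrix ι ι ℝ} {d : ℝ}

theorem isUnit_det_of_coercive (hd : 0 < d) (h : ∀ v, d * (v ⬝ᵥ v) ≤ v ⬝ᵥ (S *ᵥ v)) :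
    IsUnit S.det := by
  rw [isUnit_iff_ne_zero]
  intro h0
  obtain ⟨v, hv, hSv⟩ := exists_mulVec_eq_zero_iff.2 h0
  have h1 := h v
  rw [hSv, dotProduct_zero] at h1
  have h2 : 0 < v ⬝ᵥ v := lt_of_le_of_ne (dotProduct_self_nonneg' v)
    fun h => hv (dotProduct_self_eq_zero.1 h.symm)
  nlinarith

theorem inv_form_nonneg (hd : 0 < d) (h : ∀ v, d * (v ⬝ᵥ v) ≤ v ⬝ᵥ (S *ᵥ v)) (v : ι → ℝ) :
    0 ≤ v ⬝ᵥ (S⁻¹ *ᵥ v) := by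
  have hu := isUnit_det_of_coercive hd h
  have hv : v = S *ᵥ (S⁻¹ *ᵥ v) := by rw [mulVec_mulVec, mul_nonsing_inv _ hu, one_mulVec]
  set x := S⁻¹ *ᵥ v
  rw [hv, dotProduct_comm]
  exact le_trans (mul_nonneg hd.le (dotProduct_self_nonneg' x)) (h x)

theorem inv_form_le (hd : 0 < d) (h : ∀ v, d * (v ⬝ᵥ v) ≤ v ⬝ᵥ (S *ᵥ v)) (v : ι → ℝ) :
    v ⬝ᵥ (S⁻¹ *ᵥ v) ≤ d⁻¹ * (v ⬝ᵥ v) := by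
  have h0 := inv_form_nonneg hd h v
  have hu := isUnit_det_of_coercive hd h
  have hv : v = S *ᵥ (S⁻¹ *ᵥ v) := by rw [mulVec_mulVec, mul_nonsing_inv _ hu, one_mulVec]
  set x := S⁻¹ *ᵥ v
  have h1 := h x
  rw [← hv, dotProduct_comm x v] at h1
  have h2 := dotProduct_sq_le v x
  have h3 := dotProduct_self_nonneg' v
  rw [le_inv_mul_iff₀ hd]
  rcases h0.eq_or_lt with h4 | h4
  · rw [← h4]; simpa using h3
  · have : d * (v ⬝ᵥ x) * (v ⬝ᵥ x) ≤ (v ⬝ᵥ v) * (v ⬝ᵥ x) := by nlinarith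
    exact le_of_mul_le_mul_right this h4

theorem inv_normSq_le (hd : 0 < d) (h : ∀ v, d * (v ⬝ᵥ v) ≤ v ⬝ᵥ (S *ᵥ v)) (v : ι → ℝ) :
    (S⁻¹ *ᵥ v) ⬝ᵥ (S⁻¹ *ᵥ v) ≤ (d⁻¹) ^ 2 * (v ⬝ᵥ v) := by
  have h5 := inv_form_le hd h v
  have hu := isUnit_det_of_coercive hd h
  have hv : v = S *ᵥ (S⁻¹ *ᵥ v) := by rw [mulVec_mulVec, mul_nonsing_inv _ hu, one_mulVec]
  set x := S⁻¹ *ᵥ v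
  have h1 := h x
  rw [← hv, dotProduct_comm x v] at h1
  rw [pow_two, mul_assoc, le_inv_mul_iff₀ hd]
  linarith

end PosMatrix

/-- The resolvent `(x - WᵀW)⁻¹`. -/
def resv {m n : Type*} [Fintype m] [Fintype n] [DecidableEq n] (x : ℝ) (W : Matrix m n ℝ) :
    Matrix n n ℝ := (x • 1 - Wᵀ * W)⁻¹

section Resolvent
variable {N p : ℕ} {x b : ℝ} {W : Matrix (Fin N) (Fin p) ℝ}

theorem res_symm (x : ℝ) (W : Matrix (Fin N) (Fin p) ℝ) : (x • 1 - Wᵀ * W)ᵀ = x • 1 - Wᵀ * W := by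
  simp [transpose_sub, transpose_mul]

theorem resv_symm (x : ℝ) (W : Matrix (Fin N) (Fin p) ℝ) : (resv x W)ᵀ = resv x W := by
  rw [resv, transpose_nonsing_inv, res_symm]

theorem res_coercive (hW : matEntries W ∈ goodSet N p b) (v : Fin p → ℝ) :
    (x - b) * (v ⬝ᵥ v) ≤ v ⬝ᵥ ((x • 1 - Wᵀ * W) *ᵥ v) := by
  have h1 := hW v
  rw [toMat_matEntries] at h1
  have h2 : v ⬝ᵥ ((x • 1 - Wᵀ * W) *ᵥ v) = x * (v ⬝ᵥ v) - (W *ᵥ v) ⬝ᵥ (W *ᵥ v) := by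
    rw [sub_mulVec, dotProduct_sub, smul_mulVec, one_mulVec, dotProduct_smul, smul_eq_mul,
      dotProduct_mulVec (W *ᵥ v), ← mulVec_transpose, mulVec_mulVec, dotProduct_comm v (_ *ᵥ v)]
  rw [h2]; linarith

theorem row_normSq_le (hb : 0 ≤ b) (hW : matEntries W ∈ goodSet N p b) (i : Fin N) :
    W i ⬝ᵥ W i ≤ b := by
  have h1 := hW (W i)
  rw [toMat_matEntries] at h1
  have h2 : (W i ⬝ᵥ W i) ^ 2 ≤ (W *ᵥ W i) ⬝ᵥ (W *ᵥ W i) := by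
    have := Finset.single_le_sum (f := fun a => (W *ᵥ W i) a * (W *ᵥ W i) a)
      (fun a _ => mul_self_nonneg _) (Finset.mem_univ i)
    simp only [mulVec, dotProduct, ← pow_two] at this ⊢
    exact this
  rcases (dotProduct_self_nonneg' (W i)).eq_or_lt with h3 | h3
  · rw [← h3]; exact hb
  · refine le_of_mul_le_mul_right ?_ h3
    nlinarith

/-- Trace of `WᵀW (x - WᵀW)⁻¹ = x (x - WᵀW)⁻¹ - 1`, expanded over the rows of `W`. -/
theorem trace_resv_identity (hxb : b < x) (hW : matEntries W ∈ goodSet N p b) :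
    ∑ i, W i ⬝ᵥ (resv x W *ᵥ W i) = x * (resv x W).trace - p := by
  have hu := isUnit_det_of_coercive (sub_pos.2 hxb) (res_coercive (x := x) hW)
  have h1 : ∑ i, W i ⬝ᵥ (resv x W *ᵥ W i) = (W * resv x W * Wᵀ).trace := by
    simp only [trace, diag_apply]
    refine Finset.sum_congr rfl fun i _ => ?_
    rw [Matrix.mul_assoc, Matrix.mul_apply]
    refine Finset.sum_congr rfl fun j _ => ?_
    simp [mulVec, mul_apply, dotProduct]
  have h2 : resv x W * (x • 1 - Wᵀ * W) = 1 := nonsing_inv_mul _ hu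
  rw [h1, Matrix.mul_assoc, Matrix.trace_mul_comm, Matrix.mul_assoc]
  have h3 : resv x W * (Wᵀ * W) = x • resv x W - 1 := by
    rw [Matrix.mul_sub, Matrix.mul_smul, Matrix.mul_one] at h2
    rw [← h2]; abel
  rw [h3, trace_sub, trace_smul, trace_one]; simp

end Resolvent

section LeaveOneOut
variable {N p : ℕ} {x b : ℝ} {W : Matrix (Fin (N + 1)) (Fin p) ℝ}

/-- `W` with row `i` removed. -/
def dropRow (W : Matrix (Fin (N + 1)) (Fin p) ℝ) (i : Fin (N + 1)) : Matrix (Fin N) (Fin p) ℝ :=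
  W.submatrix i.succAbove id

theorem gram_dropRow (W : Matrix (Fin (N + 1)) (Fin p) ℝ) (i : Fin (N + 1)) :
    Wᵀ * W = (dropRow W i)ᵀ * dropRow W i + vecMulVec (W i) (W i) := by
  ext a c
  simp only [mul_apply, transpose_apply, Matrix.add_apply, vecMulVec_apply, dropRow,
    submatrix_apply, id]
  rw [Fin.sum_univ_succAbove _ i]; ring

theorem good_dropRow (hW : matEntries W ∈ goodSet (N + 1) p b) (i : Fin (N + 1)) :
    matEntries (dropRow W i) ∈ goodSet N p b := by
  intro y
  refine le_trans ?_ (hW y)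
  rw [toMat_matEntries, toMat_matEntries]
  simp only [dotProduct]
  rw [Fin.sum_univ_succAbove _ i]
  refine le_add_of_nonneg_of_le (mul_self_nonneg _) (le_of_eq ?_)
  rfl

/-- Resolvent identity for the removal of one row. -/
theorem resv_diff (hxb : b < x) (hW : matEntries W ∈ goodSet (N + 1) p b) (i : Fin (N + 1)) :
    resv x W - resv x (dropRow W i)
      = resv x W * vecMulVec (W i) (W i) * resv x (dropRow W i) := by
  have hu := isUnit_det_of_coercive (sub_pos.2 hxb) (res_coercive (x := x) hW)
  have hu' := isUnit_det_of_coercive (sub_pos.2 hxb) (res_coercive (x := x) (good_dropRow hW i))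
  have e1 : vecMulVec (W i) (W i) = (x • 1 - (dropRow W i)ᵀ * dropRow W i) - (x • 1 - Wᵀ * W) := by
    rw [gram_dropRow W i]; abel
  rw [e1, Matrix.mul_sub, Matrix.sub_mul, resv, resv, Matrix.mul_assoc, mul_nonsing_inv _ hu',
    Matrix.mul_one, nonsing_inv_mul _ hu, Matrix.one_mul]

/-- Sherman–Morrison: the quadratic form of the resolvent at a row of `W` is determined by that of
the resolvent with this row removed, which is independent of the row for Gaussian `W`. -/
theorem loo_identity (hxb : b < x) (hW : matEntries W ∈ goodSet (N + 1) p b) (i : Fin (N + 1)) :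
    (1 + W i ⬝ᵥ (resv x W *ᵥ W i)) * (1 - W i ⬝ᵥ (resv x (dropRow W i) *ᵥ W i)) = 1 := by
  have h1 := congrArg (fun M : Matrix (Fin p) (Fin p) ℝ => W i ⬝ᵥ (M *ᵥ W i)) (resv_diff hxb hW i)
  simp only [sub_mulVec, dotProduct_sub, ← mulVec_mulVec, vecMulVec_mulVec] at h1
  have h2 : W i ⬝ᵥ (resv x W *ᵥ (MulOpposite.op (W i ⬝ᵥ (resv x (dropRow W i) *ᵥ W i)) • W i))
      = (W i ⬝ᵥ (resv x (dropRow W i) *ᵥ W i)) * (W i ⬝ᵥ (resv x W *ᵥ W i)) := by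
    rw [op_smul_eq_smul, mulVec_smul, dotProduct_smul, smul_eq_mul]
  rw [h2] at h1
  linarith

/-- Removing a row is a rank-one perturbation, so it hardly changes the trace of the resolvent. -/
theorem trace_resv_diff (hb : 0 ≤ b) (hxb : b < x) (hW : matEntries W ∈ goodSet (N + 1) p b)
    (i : Fin (N + 1)) :
    |(resv x W).trace - (resv x (dropRow W i)).trace| ≤ ((x - b)⁻¹) ^ 2 * b := by
  have h1 := congrArg trace (resv_diff hxb hW i)
  rw [trace_sub] at h1
  have h2 : (resv x W * vecMulVec (W i) (W i) * resv x (dropRow W i)).trace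
      = (resv x (dropRow W i) *ᵥ W i) ⬝ᵥ (resv x W *ᵥ W i) := by
    rw [Matrix.mul_vecMulVec, Matrix.vecMulVec_mul, trace_vecMulVec, ← mulVec_transpose,
      resv_symm, dotProduct_comm]
  rw [h1, h2]
  have hd := sub_pos.2 hxb
  have a1 := inv_normSq_le hd (res_coercive (x := x) hW) (W i)
  have a2 := inv_normSq_le hd (res_coercive (x := x) (good_dropRow hW i)) (W i)
  have a3 := row_normSq_le hb hW i
  have a4 := dotProduct_sq_le (resv x (dropRow W i) *ᵥ W i) (resv x W *ᵥ W i)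
  have a5 := dotProduct_self_nonneg' (W i)
  have a6 := dotProduct_self_nonneg' (resv x W *ᵥ W i)
  change _ ≤ _ at a1
  refine abs_le_of_sq_le_sq ?_ (by positivity)
  refine a4.trans ?_
  have : ((x - b)⁻¹) ^ 2 * (W i ⬝ᵥ W i) ≤ ((x - b)⁻¹) ^ 2 * b := by gcongr
  rw [pow_two (_ * b)]
  exact mul_le_mul (a2.trans this) (a1.trans this) a6 (by positivity)

end LeaveOneOut

/-! ### The approximate Marchenko–Pastur equation -/

/-- Deterministic derivation of the Marchenko–Pastur equation: if all leave-one-out quadratic forms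
are within `ε` of the corresponding traces, the trace of the resolvent solves the quadratic
equation up to a small error. -/
theorem mp_equation_det {N p n : ℕ} {z b ε : ℝ} {W : Matrix (Fin (N + 1)) (Fin p) ℝ}
    (hb : 0 ≤ b) (hbz : b < z) (hN : N + 1 ≤ n) (hε : 0 ≤ ε)
    (hW : matEntries W ∈ goodSet (N + 1) p (n * b))
    (hloo : ∀ i, |W i ⬝ᵥ (resv (n * z) (dropRow W i) *ᵥ W i)
      - (resv (n * z) (dropRow W i)).trace| ≤ ε) :
    |(1 - (resv (n * z) W).trace) * (z * (resv (n * z) W).trace - p / n)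
      - (N + 1 : ℕ) / n * (resv (n * z) W).trace|
      ≤ (ε + b / (z - b) ^ 2 / n) * (1 + b / (z - b)) := by
  have hn : (0 : ℝ) < n := by exact_mod_cast (show 0 < n by omega)
  have hδ : 0 < z - b := sub_pos.2 hbz
  have hxb : (n : ℝ) * b < n * z := by gcongr
  have hnb : 0 ≤ (n : ℝ) * b := by positivity
  set T := (resv (n * z) W).trace with hT
  set h : Fin (N + 1) → ℝ := fun i => W i ⬝ᵥ (resv (n * z) W *ᵥ W i) with hh
  have hterm : ∀ i, |(1 + h i) * (1 - T) - 1| ≤ (ε + b / (z - b) ^ 2 / n) * (1 + b / (z - b)) := by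
    intro i
    have h1 := loo_identity hxb hW i
    have h2 := trace_resv_diff hnb hxb hW i
    have h3 := hloo i
    have h4 := inv_form_nonneg (sub_pos.2 hxb) (res_coercive (x := n * z) hW) (W i)
    have h5 := inv_form_le (sub_pos.2 hxb) (res_coercive (x := n * z) hW) (W i)
    have h6 := row_normSq_le hnb hW i
    have h4' : 0 ≤ h i := h4
    have h7 : h i ≤ b / (z - b) := by
      refine le_trans h5 ?_
      refine (mul_le_mul_of_nonneg_left h6 (by rw [← mul_sub]; positivity)).trans (le_of_eq ?_)
      rw [← mul_sub]; field_simp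
    have h8 : ((n * z - n * b)⁻¹) ^ 2 * (n * b) = b / (z - b) ^ 2 / n := by
      rw [← mul_sub]; field_simp
    rw [h8, ← hT] at h2
    set g := W i ⬝ᵥ (resv (n * z) (dropRow W i) *ᵥ W i)
    have h9 : (1 + h i) * (1 - T) - 1 = (g - T) * (1 + h i) := by
      change (1 + h i) * (1 - g) = 1 at h1
      linear_combination h1
    rw [h9, abs_mul, abs_of_nonneg (by linarith : 0 ≤ 1 + h i)]
    have h10 : |g - T| ≤ ε + b / (z - b) ^ 2 / n := by
      rw [abs_le] at *
      constructor <;> linarith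
    gcongr
  have hsum : ∑ i, h i = n * z * T - p := trace_resv_identity hxb hW
  have hS : ∑ i, ((1 + h i) * (1 - T) - 1)
      = n * ((1 - T) * (z * T - p / n) - (N + 1 : ℕ) / n * T) := by
    rw [Finset.sum_sub_distrib, ← Finset.sum_mul, Finset.sum_add_distrib, hsum]
    simp only [Finset.sum_const, Finset.card_univ, Fintype.card_fin, nsmul_eq_mul, mul_one]
    field_simp; ring
  have hle : |∑ i, ((1 + h i) * (1 - T) - 1)|
      ≤ (N + 1 : ℕ) * ((ε + b / (z - b) ^ 2 / n) * (1 + b / (z - b))) := by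
    refine (Finset.abs_sum_le_sum_abs _ _).trans ?_
    refine (Finset.sum_le_sum fun i _ => hterm i).trans (le_of_eq ?_)
    simp
  rw [hS, abs_mul, abs_of_pos hn] at hle
  refine le_of_mul_le_mul_left (hle.trans ?_) hn
  gcongr

theorem measurable_det_entry {X ι : Type*} [MeasurableSpace X] [Fintype ι] [DecidableEq ι]
    {f : X → Matrix ι ι ℝ} (hf : ∀ i j, Measurable fun x => f x i j) :
    Measurable fun x => (f x).det := by
  simp only [det_apply]
  fun_prop

theorem measurable_inv_entry {X ι : Type*} [MeasurableSpace X] [Fintype ι] [DecidableEq ι]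
    {f : X → Matrix ι ι ℝ} (hf : ∀ i j, Measurable fun x => f x i j) (i j : ι) :
    Measurable fun x => (f x)⁻¹ i j := by
  simp only [inv_def, Matrix.smul_apply, Ring.inverse_eq_inv', smul_eq_mul, adjugate_apply]
  refine (measurable_det_entry hf).inv.mul (measurable_det_entry fun a c => ?_)
  by_cases h : a = j
  · subst h; simp
  · simpa [updateRow_ne h] using hf a c

theorem measurable_resv_entry {N p : ℕ} (x : ℝ) (i j : Fin p) :
    Measurable fun g : Fin N × Fin p → ℝ => resv x (toMat g) i j := by
  refine measurable_inv_entry (fun a c => ?_) i j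
  simp only [Matrix.sub_apply, mul_apply, toMat, transpose_apply, of_apply]
  fun_prop

/-- Concentration of the leave-one-out quadratic forms around their conditional means, uniformly
over the rows, on the event that the operator norm is controlled. -/
theorem loo_prob {z b C ε : ℝ} (hbz : b < z) (hC : 0 < C) (hε : 0 < ε) :
    ∃ c, 0 < c ∧ ∀ n N p : ℕ, N + 1 ≤ n → (p : ℝ) ≤ C * n →
      gPi (Fin (N + 1) × Fin p) {g | g ∈ goodSet (N + 1) p (n * b) ∧
        ∃ i, ε ≤ |toMat g i ⬝ᵥ (resv (n * z) (dropRow (toMat g) i) *ᵥ toMat g i)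
          - (resv (n * z) (dropRow (toMat g) i)).trace|}
        ≤ ENNReal.ofReal (2 * n * Real.exp (-c * n)) := by
  obtain ⟨c, hc, hexp⟩ := gPi_quadForm_exp (D := (z - b)⁻¹) (inv_pos.2 (sub_pos.2 hbz)) hC hε
  refine ⟨c, hc, fun n N p hN hp => ?_⟩
  have hn : (0 : ℝ) < n := by exact_mod_cast (show 0 < n by omega)
  have hxb : (n : ℝ) * b < n * z := by gcongr
  have hone : ∀ i : Fin (N + 1), gPi (Fin (N + 1) × Fin p) {g | g ∈ goodSet (N + 1) p (n * b) ∧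
        ε ≤ |toMat g i ⬝ᵥ (resv (n * z) (dropRow (toMat g) i) *ᵥ toMat g i)
          - (resv (n * z) (dropRow (toMat g) i)).trace|}
        ≤ ENNReal.ofReal (2 * Real.exp (-c * n)) := by
    intro i
    let Bad : Set ((Fin N × Fin p → ℝ) × (Fin p → ℝ)) := {q | q.1 ∈ goodSet N p (n * b) ∧
      ε ≤ |q.2 ⬝ᵥ (resv (n * z) (toMat q.1) *ᵥ q.2) - (resv (n * z) (toMat q.1)).trace|}
    have hBad : MeasurableSet Bad := by
      refine MeasurableSet.inter (s₁ := Prod.fst ⁻¹' goodSet N p (n * b))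
        (s₂ := {q : (Fin N × Fin p → ℝ) × (Fin p → ℝ) | ε ≤ |q.2 ⬝ᵥ (resv (n * z) (toMat q.1) *ᵥ q.2)
          - (resv (n * z) (toMat q.1)).trace|})
        (measurable_fst (measurableSet_good N p _)) (measurableSet_le measurable_const ?_)
      have : ∀ a c, Measurable fun q : (Fin N × Fin p → ℝ) × (Fin p → ℝ) =>
          resv (n * z) (toMat q.1) a c :=
        fun a c => (measurable_resv_entry (n * z) a c).comp measurable_fst
      simp only [dotProduct, mulVec, trace, diag_apply]
      fun_prop
    let φ : (Fin (N + 1) × Fin p → ℝ) → (Fin N × Fin p → ℝ) × (Fin p → ℝ) :=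
      fun g => (fun q => g (i.succAbove q.1, q.2), fun j => g (i, j))
    have hφ : Measurable φ := by
      refine Measurable.prodMk ?_ ?_ <;>
        exact measurable_pi_lambda _ fun _ => measurable_pi_apply _
    have hsub : {g | g ∈ goodSet (N + 1) p (n * b) ∧
        ε ≤ |toMat g i ⬝ᵥ (resv (n * z) (dropRow (toMat g) i) *ᵥ toMat g i)
          - (resv (n * z) (dropRow (toMat g) i)).trace|} ⊆ φ ⁻¹' Bad :=
      fun g hg => ⟨good_dropRow (W := toMat g) hg.1 i, hg.2⟩
    refine (measure_mono hsub).trans ?_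
    rw [← (gPi_split ((rowEquiv (p := p) i).trans (Equiv.sumComm _ _))).measure_preimage
          (hφ hBad).nullMeasurableSet]
    have hid : (fun (q : (Fin N × Fin p → ℝ) × (Fin p → ℝ)) a =>
        Sum.elim q.1 q.2 ((rowEquiv (p := p) i).trans (Equiv.sumComm _ _) a)) ⁻¹' (φ ⁻¹' Bad)
        = Bad := by
      ext q
      have : φ (fun a => Sum.elim q.1 q.2 ((rowEquiv (p := p) i).trans (Equiv.sumComm _ _) a))
          = q := by
        refine Prod.ext ?_ ?_
        · funext ⟨a, j⟩; simp [φ, rowEquiv]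
        · funext j; simp [φ, rowEquiv]
      simp only [Set.mem_preimage, this]
    rw [hid]
    refine (prod_measure_le_of_section _ _ hBad MeasurableSet.empty
      (η := ENNReal.ofReal (2 * Real.exp (-c * n))) fun h _ => ?_).trans (by simp)
    by_cases hg : h ∈ goodSet N p (n * b)
    swap
    · have : Prod.mk h ⁻¹' Bad = ∅ := by
        ext r; simp [Bad, hg]
      rw [this]; simp
    have hco := res_coercive (x := n * z) (W := toMat h) hg
    refine le_trans (measure_mono ?_) (hexp (Fin p) n ((n : ℝ) • resv (n * z) (toMat h))
      (by simpa using hp) ?_ ?_)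
    · intro r hr
      have hr2 := hr.2
      simp only [Set.mem_ofPred_eq, smul_mulVec, dotProduct_smul, trace_smul, smul_eq_mul]
      rw [← mul_sub, abs_mul, abs_of_pos hn, mul_comm ε]
      exact mul_le_mul_of_nonneg_left hr2 hn.le
    · have := resv_symm (n * z) (toMat h)
      rw [IsHermitian, conjTranspose_eq_transpose_of_trivial, transpose_smul, this]
    · intro v
      have h1 := inv_form_nonneg (sub_pos.2 hxb) hco v
      rw [← resv] at h1
      have h2 := inv_form_le (sub_pos.2 hxb) hco v
      rw [smul_mulVec, dotProduct_smul, smul_eq_mul, abs_of_nonneg (mul_nonneg hn.le h1)]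
      refine (mul_le_mul_of_nonneg_left h2 hn.le).trans (le_of_eq ?_)
      have : z - b ≠ 0 := (sub_pos.2 hbz).ne'
      rw [← mul_sub]; field_simp
  have hset : {g : Fin (N + 1) × Fin p → ℝ | g ∈ goodSet (N + 1) p (n * b) ∧
        ∃ i, ε ≤ |toMat g i ⬝ᵥ (resv (n * z) (dropRow (toMat g) i) *ᵥ toMat g i)
          - (resv (n * z) (dropRow (toMat g) i)).trace|}
      ⊆ ⋃ i, {g | g ∈ goodSet (N + 1) p (n * b) ∧
        ε ≤ |toMat g i ⬝ᵥ (resv (n * z) (dropRow (toMat g) i) *ᵥ toMat g i)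
          - (resv (n * z) (dropRow (toMat g) i)).trace|} := by
    rintro g ⟨hg, i, hi⟩
    exact Set.mem_iUnion.2 ⟨i, hg, hi⟩
  refine (measure_mono hset).trans ((measure_iUnion_fintype_le _ _).trans ?_)
  refine (Finset.sum_le_sum fun i _ => hone i).trans ?_
  rw [Finset.sum_const, Finset.card_univ, Fintype.card_fin, nsmul_eq_mul,
    ← ENNReal.ofReal_natCast, ← ENNReal.ofReal_mul (by positivity)]
  refine ENNReal.ofReal_le_ofReal ?_
  have : ((N + 1 : ℕ) : ℝ) ≤ n := by exact_mod_cast hN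
  nlinarith [Real.exp_pos (-c * n)]

/-! ### Stieltjes transform of the Marchenko–Pastur law -/

theorem one_add_mul_cos_pos {q θ : ℝ} (hq : |q| < 1) : 0 < 1 + q * Real.cos θ := by
  have h1 : |q * Real.cos θ| < 1 := by
    rw [abs_mul]
    exact lt_of_le_of_lt (mul_le_of_le_one_right (abs_nonneg _) (Real.abs_cos_le_one θ)) hq
  linarith [(abs_lt.1 h1).1]

/-- The Poisson-kernel type integral behind the Marchenko–Pastur Stieltjes transform. -/
theorem integral_sin_sq_div {q : ℝ} (hq : |q| ≤ 1) :
    ∫ θ in (0 : ℝ)..Real.pi, Real.sin θ ^ 2 / (1 + 2 * q * Real.cos θ + q ^ 2) = Real.pi / 2 := by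
  rcases hq.lt_or_eq with hlt | heq
  · by_cases h0 : q = 0
    · subst h0
      simp [integral_sin_sq]
    have hD : ∀ θ, 0 < 1 + 2 * q * Real.cos θ + q ^ 2 := by
      intro θ
      have h1 := one_add_mul_cos_pos (θ := θ) hlt
      have h2 : 0 < (1 + q * Real.cos θ) ^ 2 := by positivity
      nlinarith [Real.sin_sq_add_cos_sq θ, sq_nonneg (q * Real.sin θ)]
    let F : ℝ → ℝ := fun θ => θ / 2 + (1 - q ^ 2) / (2 * q ^ 2) *
      Real.arctan (q * Real.sin θ / (1 + q * Real.cos θ)) - Real.sin θ / (2 * q)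
    have hF : ∀ θ, HasDerivAt F (Real.sin θ ^ 2 / (1 + 2 * q * Real.cos θ + q ^ 2)) θ := by
      intro θ
      have h1 := one_add_mul_cos_pos (θ := θ) hlt
      have hs := (Real.hasDerivAt_sin θ)
      have hc := (Real.hasDerivAt_cos θ)
      have hquot := ((hs.const_mul q).div ((hc.const_mul q).const_add 1) h1.ne')
      have := (((hasDerivAt_id θ).div_const 2).add
        (hquot.arctan.const_mul ((1 - q ^ 2) / (2 * q ^ 2)))).sub (hs.div_const (2 * q))
      refine this.congr_deriv ?_
      have hsc := Real.sin_sq_add_cos_sq θ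
      have hE : 1 + (q * Real.sin θ / (1 + q * Real.cos θ)) ^ 2
          = (1 + 2 * q * Real.cos θ + q ^ 2) / (1 + q * Real.cos θ) ^ 2 := by
        field_simp
        linear_combination q ^ 2 * hsc
      simp only [Pi.div_apply]
      rw [hE]
      have hD' := (hD θ).ne'
      field_simp
      have : Real.sin θ ^ 2 = 1 - Real.cos θ ^ 2 := by linarith
      simp only [this]
      ring_nf
    rw [intervalIntegral.integral_eq_sub_of_hasDerivAt (fun θ _ => hF θ)]
    · simp [F]
    · refine Continuous.intervalIntegrable ?_ _ _
      refine Continuous.div (by fun_prop) (by fun_prop) fun θ => (hD θ).ne'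
  · have hq2 : q ^ 2 = 1 := by rw [← sq_abs, heq]; norm_num
    have : ∫ θ in (0 : ℝ)..Real.pi, Real.sin θ ^ 2 / (1 + 2 * q * Real.cos θ + q ^ 2)
        = ∫ θ in (0 : ℝ)..Real.pi, (1 / 2 - q / 2 * Real.cos θ) := by
      refine intervalIntegral.integral_congr_Ioo_of_le Real.pi_pos.le fun θ hθ => ?_
      have hs := Real.sin_pos_of_mem_Ioo hθ
      have hsc := Real.sin_sq_add_cos_sq θ
      have hne : 1 + q * Real.cos θ ≠ 0 := by
        intro h
        have : (q * Real.cos θ) ^ 2 = 1 := by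
          rw [show q * Real.cos θ = -1 by linarith]; norm_num
        rw [mul_pow, hq2] at this
        nlinarith
      have hD : 1 + 2 * q * Real.cos θ + q ^ 2 = 2 * (1 + q * Real.cos θ) := by rw [hq2]; ring
      rw [hD, div_eq_iff (by simpa using hne)]
      linear_combination hsc + Real.cos θ ^ 2 * hq2
    rw [this, intervalIntegral.integral_sub (by simp) (by
      apply Continuous.intervalIntegrable; fun_prop), intervalIntegral.integral_const_mul]
    simp; ring

theorem intervalIntegrable_sin_sq_div {q : ℝ} (hq : |q| ≤ 1) :
    IntervalIntegrable (fun θ => Real.sin θ ^ 2 / (1 + 2 * q * Real.cos θ + q ^ 2)) volume 0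
      Real.pi := by
  by_contra h
  have h1 := intervalIntegral.integral_undef h
  rw [integral_sin_sq_div hq] at h1
  linarith [Real.pi_pos]

theorem image_cos_Icc {s q : ℝ} (hq : 0 < q) :
    (fun θ => s - 2 * q * Real.cos θ) '' Set.Icc 0 Real.pi = Set.Icc (s - 2 * q) (s + 2 * q) := by
  ext t
  constructor
  · rintro ⟨θ, _, rfl⟩
    constructor <;> simp only <;> nlinarith [Real.neg_one_le_cos θ, Real.cos_le_one θ]
  · rintro ⟨h1, h2⟩
    refine ⟨Real.arccos ((s - t) / (2 * q)), ⟨Real.arccos_nonneg _, Real.arccos_le_pi _⟩, ?_⟩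
    simp only
    rw [Real.cos_arccos]
    · field_simp; ring
    · rw [le_div_iff₀ (by positivity)]; linarith
    · rw [div_le_iff₀ (by positivity)]; linarith

/-- Closed form of the Marchenko–Pastur Stieltjes transform outside the bulk, in the
parametrization `z = (κ + 1)(κ + γ⁻¹) / κ` with `κ > γ^{-1/2}`. -/
theorem mpStieltjes_formula {γ z κ : ℝ} (hγ : 1 ≤ γ) (hκ : 1 / Real.sqrt γ < κ)
    (hz : z = (κ + 1) * (κ + γ⁻¹) / κ) :
    γ⁻¹ * mpStieltjes γ z = -γ⁻¹ / (γ⁻¹ + κ) := by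
  have hγ0 : 0 < γ := by linarith
  set q := 1 / Real.sqrt γ with hq
  have hq0 : 0 < q := by positivity
  have hκ0 : 0 < κ := hq0.trans hκ
  have hq2 : q ^ 2 = γ⁻¹ := by rw [hq, div_pow, Real.sq_sqrt hγ0.le]; simp
  have hq1 : q ≤ 1 := by
    rw [hq, div_le_one (by positivity)]; exact Real.one_le_sqrt.2 hγ
  have hγq : γ * q ^ 2 = 1 := by rw [hq2]; field_simp
  have hz0 : 0 < z := by rw [hz]; positivity
  have ha : aGamma γ = 1 + q ^ 2 - 2 * q := by rw [aGamma]; ring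
  have hb : bGamma γ = 1 + q ^ 2 + 2 * q := by rw [bGamma]; ring
  have hmeas : Measurable (mpDensity γ) := by
    unfold mpDensity
    refine Measurable.ite measurableSet_Icc (by fun_prop) measurable_const
  have hnn : ∀ t, 0 ≤ mpDensity γ t := by
    intro t
    unfold mpDensity
    split_ifs with h
    · have : 0 ≤ t := le_trans (sq_nonneg _) h.1
      positivity
    · exact le_rfl
  have hzt : ∀ θ, z - (1 + q ^ 2 - 2 * q * Real.cos θ)
      = κ * (1 + 2 * (q / κ) * Real.cos θ + (q / κ) ^ 2) := by
    intro θ; rw [hz, ← hq2]; field_simp; ring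
  have hrlt : |q / κ| < 1 := by
    rw [abs_of_pos (by positivity), div_lt_one hκ0]; exact hκ
  have e1 : mpStieltjes γ z = ∫ t in Set.Icc (1 + q ^ 2 - 2 * q) (1 + q ^ 2 + 2 * q),
      γ * Real.sqrt ((1 + q ^ 2 + 2 * q - t) * (t - (1 + q ^ 2 - 2 * q))) / (2 * Real.pi * t)
        * (t - z)⁻¹ := by
    rw [mpStieltjes, mpMeasure, integral_withDensity_eq_integral_toReal_smul hmeas.ennreal_ofReal
      (by simp), ← integral_indicator measurableSet_Icc]
    refine integral_congr_ae (ae_of_all _ fun t => ?_)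
    simp only [ENNReal.toReal_ofReal (hnn t), smul_eq_mul]
    rw [Set.indicator_apply, mpDensity, ha, hb]
    split_ifs <;> simp
  rw [← image_cos_Icc hq0, integral_image_eq_integral_abs_deriv_smul measurableSet_Icc
    (f' := fun θ => 2 * q * Real.sin θ)] at e1
  rotate_left
  · intro θ _
    have := ((Real.hasDerivAt_cos θ).const_mul (2 * q)).const_sub (1 + q ^ 2)
    exact (this.congr_deriv (by ring)).hasDerivWithinAt
  · intro θ hθ θ' hθ' h
    refine Real.injOn_cos hθ hθ' ?_
    simp only at h
    have : 2 * q * (Real.cos θ - Real.cos θ') = 0 := by linarith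
    rcases mul_eq_zero.1 this with h1 | h1
    · linarith
    · linarith
  have e2 : mpStieltjes γ z = ∫ θ in (0 : ℝ)..Real.pi, (2 / (Real.pi * z)) *
      (-(1 / κ) * (Real.sin θ ^ 2 / (1 + 2 * (q / κ) * Real.cos θ + (q / κ) ^ 2))
        - Real.sin θ ^ 2 / (1 + 2 * (-q) * Real.cos θ + (-q) ^ 2)) := by
    rw [e1, intervalIntegral.integral_of_le Real.pi_pos.le, ← integral_Icc_eq_integral_Ioc]
    refine setIntegral_congr_fun measurableSet_Icc fun θ hθ => ?_
    have hs : 0 ≤ Real.sin θ := Real.sin_nonneg_of_mem_Icc hθ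
    have hsc := Real.sin_sq_add_cos_sq θ
    have hsq : Real.sqrt ((1 + q ^ 2 + 2 * q - (1 + q ^ 2 - 2 * q * Real.cos θ))
        * (1 + q ^ 2 - 2 * q * Real.cos θ - (1 + q ^ 2 - 2 * q))) = 2 * q * Real.sin θ := by
      rw [show (1 + q ^ 2 + 2 * q - (1 + q ^ 2 - 2 * q * Real.cos θ))
        * (1 + q ^ 2 - 2 * q * Real.cos θ - (1 + q ^ 2 - 2 * q)) = (2 * q * Real.sin θ) ^ 2 by
          linear_combination (-4 * q ^ 2) * hsc]
      exact Real.sqrt_sq (by positivity)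
    simp only [smul_eq_mul]
    rw [hsq, abs_of_nonneg (by positivity)]
    have hE : 0 < 1 + 2 * (q / κ) * Real.cos θ + (q / κ) ^ 2 := by
      have h1 := one_add_mul_cos_pos (θ := θ) hrlt
      have h2 : 0 < (1 + (q / κ) * Real.cos θ) ^ 2 := by positivity
      nlinarith [sq_nonneg (q / κ * Real.sin θ)]
    have ht : 1 + 2 * (-q) * Real.cos θ + (-q) ^ 2 = 1 + q ^ 2 - 2 * q * Real.cos θ := by ring
    rw [ht]
    have hzt' := hzt θ
    set t := 1 + q ^ 2 - 2 * q * Real.cos θ with htdef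
    set E := 1 + 2 * (q / κ) * Real.cos θ + (q / κ) ^ 2
    have hκE : 0 < κ * E := by positivity
    have htz : t - z = -(κ * E) := by linarith
    -- for `q = 1` the denominator vanishes at `θ = 0`, where the numerator vanishes as well
    by_cases ht0 : t = 0
    · have hsin : Real.sin θ = 0 := by
        have : (1 - q) ^ 2 + 2 * q * (1 - Real.cos θ) = 0 := by rw [htdef] at ht0; linarith
        have h1 : 2 * q * (1 - Real.cos θ) ≤ 0 := by nlinarith [sq_nonneg (1 - q)]
        have h2 : 1 - Real.cos θ ≤ 0 := by
          by_contra h; push Not at h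
          have : 0 < 2 * q * (1 - Real.cos θ) := by positivity
          linarith
        have h3 : Real.cos θ = 1 := le_antisymm (Real.cos_le_one θ) (by linarith)
        rw [h3] at hsc
        have : Real.sin θ ^ 2 = 0 := by linarith
        exact pow_eq_zero_iff (two_ne_zero) |>.1 this
      rw [hsin]; simp
    · rw [htz]
      have hzz : z = t + κ * E := by linarith
      have hzne := hz0.ne'
      have hEne := hE.ne'
      have hπ := Real.pi_ne_zero
      have hγ' : γ = 1 / q ^ 2 := by field_simp; linarith
      rw [hγ']
      field_simp
      rw [hzz]; ring
  rw [e2, intervalIntegral.integral_const_mul, intervalIntegral.integral_sub,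
    intervalIntegral.integral_const_mul, integral_sin_sq_div hrlt.le,
    integral_sin_sq_div (by rw [abs_neg, abs_of_pos hq0]; exact hq1)]
  · have hπ := Real.pi_ne_zero
    rw [hz]
    have : 0 < γ⁻¹ + κ := by positivity
    have h2 : κ + γ⁻¹ ≠ 0 := by positivity
    field_simp
    ring
  · exact (intervalIntegrable_sin_sq_div hrlt.le).const_mul _
  · exact intervalIntegrable_sin_sq_div (by rw [abs_neg, abs_of_pos hq0]; exact hq1)

/-! ### Selection of the root -/

/-- The map `κ ↦ (κ + 1)(κ + q²)/κ` takes `(q, ∞)` onto `((1 + q)², ∞)`; with `q = γ^{-1/2}` this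
parametrizes the half-line to the right of the Marchenko–Pastur edge. -/
theorem exists_kappa {q z : ℝ} (hq : 0 < q) (hz : (1 + q) ^ 2 < z) :
    ∃ κ, q < κ ∧ z = (κ + 1) * (κ + q ^ 2) / κ := by
  set B := z - 1 - q ^ 2 with hB
  have hB2 : 2 * q < B := by rw [hB]; nlinarith
  have hd : 0 < B ^ 2 - 4 * q ^ 2 := by nlinarith
  set r := Real.sqrt (B ^ 2 - 4 * q ^ 2)
  have hr : r ^ 2 = B ^ 2 - 4 * q ^ 2 := Real.sq_sqrt hd.le
  have hr0 : 0 < r := Real.sqrt_pos.2 hd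
  refine ⟨(B + r) / 2, by linarith, ?_⟩
  have h0 : 0 < (B + r) / 2 := by linarith
  rw [eq_div_iff h0.ne']
  rw [show z = B + 1 + q ^ 2 by rw [hB]; ring]
  linear_combination (-1/4) * hr

theorem kappa_mono {q κ κ' : ℝ} (hq : 0 < q) (h1 : q ≤ κ') (h2 : κ' < κ) :
    (κ' + 1) * (κ' + q ^ 2) / κ' < (κ + 1) * (κ + q ^ 2) / κ := by
  have hκ' : 0 < κ' := hq.trans_le h1
  have hκ : 0 < κ := hκ'.trans h2
  rw [div_lt_div_iff₀ hκ' hκ]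
  have : q ^ 2 < κ * κ' := by nlinarith
  nlinarith [mul_pos (sub_pos.2 h2) (sub_pos.2 this)]

/-- Both roots of the limiting quadratic equation are admissible for a single `z`; comparison with
a second point `z' < z` rules out the larger one. -/
theorem root_select {T T' : ℕ → ℝ} {c κ κ' z z' : ℝ} (hc : 0 < c) (hκ' : 0 < κ') (hcκ : c < κ' ^ 2)
    (hlt : κ' < κ) (hz : z = (κ + 1) * (κ + c) / κ) (hz' : z' = (κ' + 1) * (κ' + c) / κ')
    (h : Tendsto (fun n => (1 - T n) * (z * T n - c) - T n) atTop (𝓝 0))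
    (h' : Tendsto (fun n => (1 - T' n) * (z' * T' n - c) - T' n) atTop (𝓝 0))
    (hle : ∀ᶠ n in atTop, T n ≤ T' n) : Tendsto T atTop (𝓝 (c / (c + κ))) := by
  have hκ : 0 < κ := hκ'.trans hlt
  have hz0 : 0 < z := by rw [hz]; positivity
  have hz0' : 0 < z' := by rw [hz']; positivity
  have fac : ∀ x, (1 - x) * (z * x - c) - x = -(z * ((x - c / (c + κ)) * (x - κ / (1 + κ)))) := by
    intro x; rw [hz]; field_simp; ring
  have fac' : ∀ x, (1 - x) * (z' * x - c) - x
      = -(z' * ((x - c / (c + κ')) * (x - κ' / (1 + κ')))) := by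
    intro x; rw [hz']; field_simp; ring
  have hroots' : c / (c + κ') < κ' / (1 + κ') := by
    rw [div_lt_div_iff₀ (by positivity) (by positivity)]; nlinarith
  have hgap : κ' / (1 + κ') < κ / (1 + κ) := by
    rw [div_lt_div_iff₀ (by positivity) (by positivity)]; nlinarith
  obtain ⟨η, hη⟩ : ∃ η, η = (κ / (1 + κ) - κ' / (1 + κ')) / 2 := ⟨_, rfl⟩
  have hη0 : 0 < η := by rw [hη]; linarith
  have hT' : ∀ᶠ n in atTop, T' n ≤ κ' / (1 + κ') + η := by
    have := (Metric.tendsto_nhds.1 h' (z' * η ^ 2) (by positivity))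
    filter_upwards [this] with n hn
    by_contra hcon
    push Not at hcon
    rw [Real.dist_eq, sub_zero, fac', abs_neg, abs_mul, abs_of_pos hz0'] at hn
    have h1 := lt_of_mul_lt_mul_left hn hz0'.le
    have h2 := (le_abs_self _).trans_lt h1
    nlinarith
  have hT : ∀ᶠ n in atTop, η ≤ κ / (1 + κ) - T n := by
    filter_upwards [hT', hle] with n h1 h2
    linarith
  rw [tendsto_iff_dist_tendsto_zero]
  have hlim : Tendsto (fun n => (z * η)⁻¹ * |(1 - T n) * (z * T n - c) - T n|) atTop (𝓝 0) := by
    simpa using h.abs.const_mul (z * η)⁻¹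
  refine squeeze_zero' (Eventually.of_forall fun n => dist_nonneg) ?_ hlim
  filter_upwards [hT] with n hn
  rw [Real.dist_eq, fac, abs_neg, abs_mul, abs_mul, abs_of_pos hz0, le_inv_mul_iff₀ (by positivity),
    abs_sub_comm (T n) (κ / (1 + κ)), abs_of_nonneg (by linarith : 0 ≤ κ / (1 + κ) - T n)]
  have := mul_le_mul_of_nonneg_left hn (mul_nonneg hz0.le (abs_nonneg (T n - c / (c + κ))))
  linarith

/-! ### Ordered eigenvalues -/

theorem gram_isHermitian {N p : ℕ} (W : Matrix (Fin N) (Fin p) ℝ) : (Wᵀ * W).IsHermitian := by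
  have := Matrix.isHermitian_conjTranspose_mul_self W
  rwa [Matrix.conjTranspose_eq_transpose_of_trivial] at this

theorem eigsDesc_length {p : ℕ} {A : Matrix (Fin p) (Fin p) ℝ} (h : A.IsHermitian) :
    (eigsDesc A).length = p := by
  rw [eigsDesc, dif_pos h, List.length_insertionSort, List.length_ofFn]

theorem ofFn_ithEigDesc {p : ℕ} {A : Matrix (Fin p) (Fin p) ℝ} (h : A.IsHermitian) :
    List.ofFn (fun α : Fin p => ithEigDesc A α) = eigsDesc A := by
  apply List.ext_getElem
  · simp [eigsDesc_length h]
  · intro i h1 h2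
    simp [ithEigDesc, h2]

theorem ithEigDesc_perm {p : ℕ} {A : Matrix (Fin p) (Fin p) ℝ} (h : A.IsHermitian) :
    (List.ofFn (fun α : Fin p => ithEigDesc A α)).Perm (List.ofFn h.eigenvalues) := by
  rw [ofFn_ithEigDesc h, eigsDesc, dif_pos h]
  exact List.perm_insertionSort _ _

theorem ithEigDesc_antitone {p : ℕ} {A : Matrix (Fin p) (Fin p) ℝ} (h : A.IsHermitian) :
    Antitone (fun α : Fin p => ithEigDesc A α) := by
  rw [← List.sortedGE_ofFn_iff, ofFn_ithEigDesc h, eigsDesc, dif_pos h]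
  exact List.sortedGE_insertionSort

theorem ithEigDesc_map {p : ℕ} {A : Matrix (Fin p) (Fin p) ℝ} (h : A.IsHermitian) :
    (Finset.univ.val.map (fun α : Fin p => ithEigDesc A α)) =
      Finset.univ.val.map h.eigenvalues := by
  rw [Fin.univ_val_map, Fin.univ_val_map]
  exact Quot.sound (ithEigDesc_perm h)

theorem ithEigDesc_sum {p : ℕ} {A : Matrix (Fin p) (Fin p) ℝ} (h : A.IsHermitian) (f : ℝ → ℝ) :
    ∑ α : Fin p, f (ithEigDesc A α) = ∑ i, f (h.eigenvalues i) := by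
  have := congrArg (fun s => (Multiset.map f s).sum) (ithEigDesc_map h)
  simp only [Multiset.map_map] at this
  exact this

theorem ithEigDesc_prod {p : ℕ} {A : Matrix (Fin p) (Fin p) ℝ} (h : A.IsHermitian) (f : ℝ → ℝ) :
    ∏ α : Fin p, f (ithEigDesc A α) = ∏ i, f (h.eigenvalues i) := by
  have := congrArg (fun s => (Multiset.map f s).prod) (ithEigDesc_map h)
  simp only [Multiset.map_map] at this
  exact this

theorem ithEigDesc_mem {p : ℕ} {A : Matrix (Fin p) (Fin p) ℝ} (h : A.IsHermitian) (α : Fin p) :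
    ∃ i, ithEigDesc A α = h.eigenvalues i := by
  have : ithEigDesc A α ∈ List.ofFn h.eigenvalues :=
    (ithEigDesc_perm h).subset (List.mem_ofFn.2 ⟨α, rfl⟩)
  obtain ⟨i, hi⟩ := List.mem_ofFn.1 this
  exact ⟨i, hi.symm⟩

theorem prod_sub_ithEigDesc {p : ℕ} {A : Matrix (Fin p) (Fin p) ℝ} (h : A.IsHermitian) (t : ℝ) :
    ∏ α : Fin p, (t - ithEigDesc A α) = (t • (1 : Matrix (Fin p) (Fin p) ℝ) - A).det := by
  rw [ithEigDesc_prod h (fun x => t - x)]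
  have := congrArg (Polynomial.eval t) h.charpoly_eq
  rw [Matrix.eval_charpoly] at this
  rw [Polynomial.eval_prod] at this
  simp only [Polynomial.eval_sub, Polynomial.eval_X, Polynomial.eval_C] at this
  rw [Matrix.smul_one_eq_diagonal]
  simpa [Matrix.scalar_apply] using this.symm

/-- Eigenvalues of a Gram matrix lie in `[0, b]` when `‖W y‖² ≤ b ‖y‖²` for all `y`. -/
theorem ithEigDesc_bounds {N p : ℕ} {W : Matrix (Fin N) (Fin p) ℝ} {b : ℝ}
    (hW : matEntries W ∈ goodSet N p b) (α : Fin p) :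
    0 ≤ ithEigDesc (Wᵀ * W) α ∧ ithEigDesc (Wᵀ * W) α ≤ b := by
  have h := gram_isHermitian W
  obtain ⟨i, hi⟩ := ithEigDesc_mem h α
  set v : Fin p → ℝ := (h.eigenvectorBasis i).ofLp with hv
  have hmul : (Wᵀ * W) *ᵥ v = h.eigenvalues i • v := h.mulVec_eigenvectorBasis i
  have hnorm : v ⬝ᵥ v = 1 := by
    have h1 : inner ℝ (h.eigenvectorBasis i) (h.eigenvectorBasis i) = (1 : ℝ) := by
      rw [real_inner_self_eq_norm_sq, h.eigenvectorBasis.norm_eq_one]; norm_num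
    rw [EuclideanSpace.inner_eq_star_dotProduct] at h1
    simpa using h1
  have hq : (W *ᵥ v) ⬝ᵥ (W *ᵥ v) = h.eigenvalues i := by
    have : v ⬝ᵥ ((Wᵀ * W) *ᵥ v) = (W *ᵥ v) ⬝ᵥ (W *ᵥ v) := by
      rw [← Matrix.mulVec_mulVec, Matrix.dotProduct_mulVec, Matrix.vecMul_transpose]
    rw [← this, hmul, dotProduct_smul, hnorm]; simp
  rw [hi]
  constructor
  · rw [← hq]; exact dotProduct_self_nonneg' _
  · have := hW v
    rw [hnorm, toMat_matEntries, mul_one] at this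
    rw [← hq]; exact this

theorem trace_resv_eq_sum {N p : ℕ} {W : Matrix (Fin N) (Fin p) ℝ} {x : ℝ}
    (hx : ∀ α : Fin p, x - ithEigDesc (Wᵀ * W) α ≠ 0) :
    (resv x W).trace = ∑ α : Fin p, (x - ithEigDesc (Wᵀ * W) α)⁻¹ := by
  have h := gram_isHermitian W
  rw [ithEigDesc_sum h (fun y => (x - y)⁻¹)]
  have hx' : ∀ i, x - h.eigenvalues i ≠ 0 := by
    intro i
    have : h.eigenvalues i ∈ List.ofFn (fun α : Fin p => ithEigDesc (Wᵀ * W) α) :=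
      (ithEigDesc_perm h).symm.subset (List.mem_ofFn.2 ⟨i, rfl⟩)
    obtain ⟨α, hα⟩ := List.mem_ofFn.1 this
    rw [← hα]; exact hx α
  set U : Matrix (Fin p) (Fin p) ℝ := (h.eigenvectorUnitary : Matrix (Fin p) (Fin p) ℝ) with hU
  have hUU : U * star U = 1 := Unitary.coe_mul_star_self h.eigenvectorUnitary
  have hUU' : star U * U = 1 := Unitary.coe_star_mul_self h.eigenvectorUnitary
  have hs : Wᵀ * W = U * diagonal h.eigenvalues * star U := by
    have := h.spectral_theorem
    rw [Unitary.conjStarAlgAut_apply] at this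
    exact this
  have hinv : resv x W = U * diagonal (fun i => (x - h.eigenvalues i)⁻¹) * star U := by
    apply Matrix.inv_eq_right_inv
    have e1 : x • (1 : Matrix (Fin p) (Fin p) ℝ) - Wᵀ * W
        = U * diagonal (fun i => x - h.eigenvalues i) * star U := by
      have : diagonal (fun i => x - h.eigenvalues i)
          = x • (1 : Matrix (Fin p) (Fin p) ℝ) - diagonal h.eigenvalues := by
        rw [Matrix.smul_one_eq_diagonal, Matrix.diagonal_sub]
      rw [this, Matrix.mul_sub, Matrix.sub_mul, ← hs]
      simp [hUU]
    rw [e1]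
    calc _ = U * diagonal (fun i => x - h.eigenvalues i) * (star U * U)
          * diagonal (fun i => (x - h.eigenvalues i)⁻¹) * star U := by noncomm_ring
      _ = U * (diagonal (fun i => x - h.eigenvalues i)
          * diagonal (fun i => (x - h.eigenvalues i)⁻¹)) * star U := by
          rw [hUU']; noncomm_ring
      _ = 1 := by
          rw [Matrix.diagonal_mul_diagonal]
          simp only [mul_inv_cancel₀ (hx' _)]
          rw [Matrix.diagonal_one]; simp [hUU]
  rw [hinv, Matrix.trace_mul_comm, ← Matrix.mul_assoc, hUU', Matrix.one_mul, Matrix.trace_diagonal]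

/-- The values `∏ (t - λ_α)` at natural numbers `t` determine a decreasing tuple `λ`. -/
theorem antitone_prod_injOn (p : ℕ) :
    Set.InjOn (fun (l : Fin p → ℝ) (t : ℕ) => ∏ α, ((t : ℝ) - l α)) {l | Antitone l} := by
  intro l hl l' hl' heq
  set P : Polynomial ℝ := ∏ α, (Polynomial.X - Polynomial.C (l α)) with hP
  set Q : Polynomial ℝ := ∏ α, (Polynomial.X - Polynomial.C (l' α)) with hQ
  have hPQ : P = Q := by
    apply Polynomial.eq_of_infinite_eval_eq
    refine Set.Infinite.mono ?_ (Set.infinite_range_of_injective (Nat.cast_injective (R := ℝ)))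
    rintro _ ⟨t, rfl⟩
    have := congrFun heq t
    simp only [Set.mem_ofPred_eq, hP, hQ, Polynomial.eval_prod, Polynomial.eval_sub,
      Polynomial.eval_X, Polynomial.eval_C]
    exact this
  have hroots : Finset.univ.val.map l = Finset.univ.val.map l' := by
    have r (f : Fin p → ℝ) : (∏ α, (Polynomial.X - Polynomial.C (f α))).roots
        = Finset.univ.val.map f := by
      have := Polynomial.roots_multiset_prod_X_sub_C (Finset.univ.val.map f)
      rw [Multiset.map_map] at this
      exact this
    rw [← r l, ← r l']
    exact congrArg _ hPQ
  rw [Fin.univ_val_map, Fin.univ_val_map] at hroots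
  have := List.Perm.eq_of_sortedGE (List.sortedGE_ofFn_iff.2 hl) (List.sortedGE_ofFn_iff.2 hl')
    (Quotient.exact hroots)
  exact List.ofFn_injective this

/-- Ordered eigenvalues are measurable functions of the matrix entries: they are recovered from
the characteristic polynomial by inverting an injective continuous map (Lusin–Souslin). -/
theorem measurable_eigs (N p : ℕ) :
    Measurable (fun (g : Fin N × Fin p → ℝ) (α : Fin p) =>
      ithEigDesc ((toMat g)ᵀ * toMat g) α) := by
  have hS : MeasurableSet {l : Fin p → ℝ | Antitone l} := by
    have : {l : Fin p → ℝ | Antitone l} = ⋂ a, ⋂ b, ⋂ (_ : a ≤ b), {l | l b ≤ l a} := by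
      ext l; simp [Antitone]
    rw [this]
    exact MeasurableSet.iInter fun a => MeasurableSet.iInter fun b => MeasurableSet.iInter fun _ =>
      measurableSet_le (measurable_pi_apply b) (measurable_pi_apply a)
  have hemb := ContinuousOn.measurableEmbedding (γ := Fin p → ℝ) (β := ℕ → ℝ)
    (s := {l : Fin p → ℝ | Antitone l}) hS
    (f := fun (l : Fin p → ℝ) (t : ℕ) => ∏ α, ((t : ℝ) - l α))
    (by fun_prop) (antitone_prod_injOn p)
  set F : (Fin N × Fin p → ℝ) → {l : Fin p → ℝ | Antitone l} :=
    fun g => ⟨fun α => ithEigDesc ((toMat g)ᵀ * toMat g) α,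
      ithEigDesc_antitone (gram_isHermitian _)⟩ with hF
  have hFm : Measurable F := by
    rw [← hemb.measurable_comp_iff]
    refine measurable_pi_lambda _ fun t => ?_
    have : (fun g => (Set.domRestrict {l : Fin p → ℝ | Antitone l}
        (fun (l : Fin p → ℝ) (t : ℕ) => ∏ α, ((t : ℝ) - l α)) ∘ F) g t)
        = fun g => ((t : ℝ) • (1 : Matrix (Fin p) (Fin p) ℝ)
          - (toMat g)ᵀ * toMat g).det := by
      funext g
      exact prod_sub_ithEigDesc (gram_isHermitian _) _
    rw [this]
    apply measurable_det_entry
    intro i j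
    simp only [Matrix.sub_apply, Matrix.mul_apply, Matrix.smul_apply, Matrix.transpose_apply, toMat]
    fun_prop
  exact measurable_subtype_coe.comp hFm

/-! ### Weighted Gaussian products and Borel–Cantelli -/

/-- Concentration of the weighted products `∑ d_α g(u_α) g(v_α)` of Gaussian coordinates about
their mean, at a rate uniform in the dimension, the positions and the (bounded) weights. -/
theorem gPi_bilin_exp {D C ε : ℝ} (hD0 : 0 < D) (hC : 0 < C) (hε : 0 < ε) :
    ∃ c : ℝ, 0 < c ∧ ∀ (ι : Type) [Fintype ι] [DecidableEq ι] (n m : ℕ) (u v : Fin m → ι)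
      (d : Fin m → ℝ), (Fintype.card ι : ℝ) ≤ C * n → u.Injective → v.Injective →
      (∀ α, |d α| ≤ D) →
      gPi ι {g | ε * n ≤ |∑ α, d α * (g (u α) * g (v α)) - ∑ α, if u α = v α then d α else 0|}
        ≤ ENNReal.ofReal (2 * Real.exp (-c * n)) := by
  obtain ⟨c, hc, h⟩ := gPi_quadForm_exp hD0 hC hε
  refine ⟨c, hc, ?_⟩
  intro ι _ _ n m u v d hcard hu hv hd
  -- symmetrised matrix of the bilinear form
  set M : Matrix ι ι ℝ := ∑ α, (Matrix.single (u α) (v α) (d α / 2)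
    + Matrix.single (v α) (u α) (d α / 2)) with hM
  have hform : ∀ x : ι → ℝ, x ⬝ᵥ (M *ᵥ x) = ∑ α, d α * (x (u α) * x (v α)) := by
    intro x
    rw [hM, Matrix.sum_mulVec, dotProduct_sum]
    refine Finset.sum_congr rfl fun α _ => ?_
    rw [Matrix.add_mulVec, dotProduct_add, Matrix.single_mulVec, Matrix.single_mulVec]
    simp only [dotProduct, Function.update_apply, Pi.zero_apply, mul_ite, mul_zero,
      Finset.sum_ite_eq', Finset.mem_univ, if_true]
    ring
  have htrace : M.trace = ∑ α, if u α = v α then d α else 0 := by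
    rw [hM, Matrix.trace_sum]
    refine Finset.sum_congr rfl fun α _ => ?_
    rw [Matrix.trace_add]
    split_ifs with huv
    · rw [huv, Matrix.trace_single_eq_same]; ring
    · rw [Matrix.trace_single_eq_of_ne _ _ _ huv,
        Matrix.trace_single_eq_of_ne _ _ _ (Ne.symm huv)]; ring
  have hherm : M.IsHermitian := by
    rw [Matrix.IsHermitian, Matrix.conjTranspose_eq_transpose_of_trivial, hM,
      Matrix.transpose_sum]
    refine Finset.sum_congr rfl fun α _ => ?_
    rw [Matrix.transpose_add, Matrix.transpose_single, Matrix.transpose_single, add_comm]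
  have hinj : ∀ (w : Fin m → ι), w.Injective → ∀ x : ι → ℝ,
      ∑ α, x (w α) ^ 2 ≤ x ⬝ᵥ x := by
    intro w hw x
    calc ∑ α, x (w α) ^ 2 = ∑ i ∈ Finset.univ.map ⟨w, hw⟩, x i ^ 2 := by simp
      _ ≤ ∑ i, x i ^ 2 := Finset.sum_le_sum_of_subset_of_nonneg (Finset.subset_univ _)
          fun i _ _ => sq_nonneg _
      _ = x ⬝ᵥ x := by simp [dotProduct, sq]
  have hbound : ∀ x : ι → ℝ, |x ⬝ᵥ (M *ᵥ x)| ≤ D * (x ⬝ᵥ x) := by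
    intro x
    rw [hform]
    calc |∑ α, d α * (x (u α) * x (v α))| ≤ ∑ α, |d α * (x (u α) * x (v α))| :=
          Finset.abs_sum_le_sum_abs _ _
      _ ≤ ∑ α, D * ((x (u α) ^ 2 + x (v α) ^ 2) / 2) := by
          refine Finset.sum_le_sum fun α _ => ?_
          rw [abs_mul]
          refine mul_le_mul (hd α) ?_ (abs_nonneg _) hD0.le
          rw [abs_le]
          constructor <;> nlinarith [sq_nonneg (x (u α) - x (v α)), sq_nonneg (x (u α) + x (v α))]
      _ = D * ((∑ α, x (u α) ^ 2 + ∑ α, x (v α) ^ 2) / 2) := by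
          rw [← Finset.mul_sum, ← Finset.sum_div, Finset.sum_add_distrib]
      _ ≤ D * (x ⬝ᵥ x) := by
          refine mul_le_mul_of_nonneg_left ?_ hD0.le
          have := hinj u hu x
          have := hinj v hv x
          linarith
  have := h ι n M hcard hherm hbound
  simpa only [hform, htrace] using this

/-- The joint law of three independent Gaussian arrays, the first two gathered in one array. -/
theorem joint_law {Ω α β τ : Type*} [Fintype α] [Fintype β] [Fintype τ] [MeasurableSpace Ω]
    {P : Measure Ω} [IsProbabilityMeasure P] {a : Ω → α → ℝ} {b : Ω → β → ℝ} {w : Ω → τ → ℝ}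
    (ha : P.map a = gPi α) (hb : P.map b = gPi β) (hw : P.map w = gPi τ)
    (h1 : IndepFun a (fun ω => (b ω, w ω)) P) (h2 : IndepFun b w P) :
    AEMeasurable (fun ω => (w ω, Sum.elim (a ω) (b ω))) P ∧
    P.map (fun ω => (w ω, Sum.elim (a ω) (b ω))) = (gPi τ).prod (gPi (α ⊕ β)) := by
  have ma : AEMeasurable a P :=
    AEMeasurable.of_map_ne_zero (by rw [ha]; exact IsProbabilityMeasure.ne_zero _)
  have mb : AEMeasurable b P :=
    AEMeasurable.of_map_ne_zero (by rw [hb]; exact IsProbabilityMeasure.ne_zero _)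
  have mw : AEMeasurable w P :=
    AEMeasurable.of_map_ne_zero (by rw [hw]; exact IsProbabilityMeasure.ne_zero _)
  have e2 := (indepFun_iff_map_prod_eq_prod_map_map mb mw).1 h2
  have e1 := (indepFun_iff_map_prod_eq_prod_map_map ma (mb.prodMk mw)).1 h1
  rw [e2, ha, hb, hw] at e1
  have s1 : MeasurePreserving (MeasurableEquiv.prodAssoc.symm)
      ((gPi α).prod ((gPi β).prod (gPi τ))) (((gPi α).prod (gPi β)).prod (gPi τ)) :=
    (measurePreserving_prodAssoc (gPi α) (gPi β) (gPi τ)).symm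
  have s2 := Measure.measurePreserving_swap (μ := (gPi α).prod (gPi β)) (ν := gPi τ)
  have s3 := (MeasurePreserving.id (gPi τ)).prod (gPi_split (Equiv.refl (α ⊕ β)))
  have s := s3.comp (s2.comp s1)
  have hfun : (fun ω => (w ω, Sum.elim (a ω) (b ω)))
      = (Prod.map id (fun (q : (α → ℝ) × (β → ℝ)) i => Sum.elim q.1 q.2 (Equiv.refl _ i))
        ∘ Prod.swap ∘ MeasurableEquiv.prodAssoc.symm) ∘ fun ω => (a ω, (b ω, w ω)) := by
    funext ω; rfl
  have mabw : AEMeasurable (fun ω => (a ω, (b ω, w ω))) P := ma.prodMk (mb.prodMk mw)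
  rw [hfun]
  refine ⟨s.measurable.comp_aemeasurable mabw, ?_⟩
  rw [← AEMeasurable.map_map_of_aemeasurable s.measurable.aemeasurable mabw, e1, s.map_eq]

/-- Concentration of weighted products whose weights are functions of an independent array `w`,
bounded on the event that `w` is good. -/
theorem random_weight_exp {D C ε : ℝ} (hD0 : 0 < D) (hC : 0 < C) (hε : 0 < ε) :
    ∃ c : ℝ, 0 < c ∧ ∀ (ι τ : Type) [Fintype ι] [DecidableEq ι] [Fintype τ] (n m : ℕ)
      (u v : Fin m → ι) (d : (τ → ℝ) → Fin m → ℝ) (G : Set (τ → ℝ)),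
      (Fintype.card ι : ℝ) ≤ C * n → u.Injective → v.Injective →
      Measurable d → MeasurableSet G → (∀ w ∈ G, ∀ α, |d w α| ≤ D) →
      ((gPi τ).prod (gPi ι)) {q | q.1 ∈ G ∧ ε * n ≤ |∑ α, d q.1 α * (q.2 (u α) * q.2 (v α))
          - ∑ α, if u α = v α then d q.1 α else 0|}
        ≤ ENNReal.ofReal (2 * Real.exp (-c * n)) := by
  obtain ⟨c, hc, h⟩ := gPi_bilin_exp hD0 hC hε
  refine ⟨c, hc, ?_⟩
  intro ι τ _ _ _ n m u v d G hcard hu hv hd hG hdG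
  have hdα : ∀ α, Measurable fun w => d w α := fun α => (measurable_pi_apply α).comp hd
  have hmeas : MeasurableSet {q : (τ → ℝ) × (ι → ℝ) | q.1 ∈ G ∧
      ε * n ≤ |∑ α, d q.1 α * (q.2 (u α) * q.2 (v α))
          - ∑ α, if u α = v α then d q.1 α else 0|} := by
    rw [Set.ofPred_and]
    refine (measurable_fst hG).inter (measurableSet_le measurable_const ?_)
    refine Measurable.abs (Measurable.sub ?_ ?_)
    · refine Finset.measurable_sum _ fun α _ => ?_
      have hfst : Measurable fun q : (τ → ℝ) × (ι → ℝ) => d q.1 α := (hdα α).comp measurable_fst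
      fun_prop
    · refine Finset.measurable_sum _ fun α _ => ?_
      split_ifs
      · exact (hdα α).comp measurable_fst
      · exact measurable_const
  refine (prod_measure_le_of_section _ _ hmeas MeasurableSet.empty
    (η := ENNReal.ofReal (2 * Real.exp (-c * n))) ?_).trans (by simp)
  intro w _
  by_cases hw : w ∈ G
  · refine le_trans (measure_mono ?_) (h ι n m u v (d w) hcard hu hv (hdG w hw))
    intro g hg
    exact hg.2
  · refine le_trans (le_of_eq ?_) zero_le
    convert measure_empty (μ := gPi ι)
    ext g
    simp [hw]

/-- Borel–Cantelli for events of eventually exponentially small probability. -/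
theorem borel_cantelli_exp {Ω : Type*} [MeasurableSpace Ω] {P : Measure Ω} {S : ℕ → Set Ω}
    {A c : ℝ} (hc : 0 < c)
    (h : ∀ᶠ n : ℕ in atTop, P (S n) ≤ ENNReal.ofReal (A * n * Real.exp (-c * n))) :
    ∀ᵐ ω ∂P, ∀ᶠ n in atTop, ω ∉ S n := by
  obtain ⟨N, hN⟩ := eventually_atTop.1 h
  have hs : Summable fun n : ℕ => A * ((n : ℝ) ^ 1 * Real.exp (-c * n)) :=
    (Real.summable_pow_mul_exp_neg_nat_mul 1 hc).mul_left A
  have := ae_eventually_notMem (μ := P) (s := fun n => if n < N then ∅ else S n) (by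
    refine ne_top_of_le_ne_top hs.tsum_ofReal_ne_top (ENNReal.tsum_le_tsum fun n => ?_)
    split_ifs with hn
    · simp
    · refine (hN n (not_lt.1 hn)).trans (le_of_eq ?_)
      congr 1; ring)
  filter_upwards [this] with ω hω
  filter_upwards [hω, eventually_ge_atTop N] with n hn hnN
  simpa [not_lt.2 hnN] using hn

/-! ### Almost sure behaviour of the resolvent trace -/

theorem trace_resv_bounds {N p n : ℕ} {z b : ℝ} {W : Matrix (Fin N) (Fin p) ℝ} (hn : 1 ≤ n)
    (hbz : b < z) (hW : matEntries W ∈ goodSet N p (n * b)) :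
    (resv (n * z) W).trace = ∑ α : Fin p, ((n : ℝ) * z - ithEigDesc (Wᵀ * W) α)⁻¹ ∧
    0 ≤ (resv (n * z) W).trace ∧ (resv (n * z) W).trace ≤ (p : ℝ) / n * (z - b)⁻¹ := by
  have hn0 : (0 : ℝ) < n := by exact_mod_cast hn
  have hpos : ∀ α : Fin p, (n : ℝ) * (z - b) ≤ n * z - ithEigDesc (Wᵀ * W) α := fun α => by
    have := (ithEigDesc_bounds hW α).2; linarith
  have hzb : 0 < (n : ℝ) * (z - b) := mul_pos hn0 (sub_pos.2 hbz)
  have e := trace_resv_eq_sum (W := W) (x := n * z) fun α => (hzb.trans_le (hpos α)).ne'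
  refine ⟨e, ?_, ?_⟩
  · rw [e]
    exact Finset.sum_nonneg fun α _ => inv_nonneg.2 (hzb.trans_le (hpos α)).le
  · rw [e]
    calc _ ≤ ∑ α : Fin p, ((n : ℝ) * (z - b))⁻¹ :=
          Finset.sum_le_sum fun α _ => inv_anti₀ hzb (hpos α)
      _ = _ := by
          simp only [Finset.sum_const, Finset.card_univ, Fintype.card_fin, nsmul_eq_mul]
          field_simp

theorem trace_resv_anti {N p n : ℕ} {z z' b : ℝ} {W : Matrix (Fin N) (Fin p) ℝ} (hn : 1 ≤ n)
    (hbz : b < z') (hz : z' ≤ z) (hW : matEntries W ∈ goodSet N p (n * b)) :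
    (resv (n * z) W).trace ≤ (resv (n * z') W).trace := by
  have hn0 : (0 : ℝ) < n := by exact_mod_cast hn
  rw [(trace_resv_bounds hn (hbz.trans_le hz) hW).1, (trace_resv_bounds hn hbz hW).1]
  refine Finset.sum_le_sum fun α _ => inv_anti₀ ?_ ?_
  · have := (ithEigDesc_bounds hW α).2
    have : (n : ℝ) * b < n * z' := by gcongr
    linarith
  · have : (n : ℝ) * z' ≤ n * z := by gcongr
    linarith

/-- With overwhelming probability, the trace of the resolvent satisfies the approximate
Marchenko–Pastur quadratic equation. -/
theorem mp_equation_prob {z b C ε : ℝ} (hb : 0 ≤ b) (hbz : b < z) (hC : 0 < C) (hε : 0 < ε) :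
    ∃ c : ℝ, 0 < c ∧ ∀ n N p : ℕ, 1 ≤ N → N ≤ n → (p : ℝ) ≤ C * n →
      gPi (Fin N × Fin p) {g | g ∈ goodSet N p (n * b) ∧
        (ε + b / (z - b) ^ 2 / n) * (1 + b / (z - b)) <
          |(1 - (resv (n * z) (toMat g)).trace) * (z * (resv (n * z) (toMat g)).trace - p / n)
            - N / n * (resv (n * z) (toMat g)).trace|}
        ≤ ENNReal.ofReal (2 * n * Real.exp (-c * n)) := by
  obtain ⟨c, hc, h⟩ := loo_prob hbz hC hε
  refine ⟨c, hc, ?_⟩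
  intro n N p hN hNn hp
  obtain ⟨N, rfl⟩ : ∃ M, N = M + 1 := ⟨N - 1, by omega⟩
  refine le_trans (measure_mono ?_) (h n N p hNn hp)
  rintro g ⟨hg, hlt⟩
  refine ⟨hg, ?_⟩
  by_contra! hcon
  exact absurd (mp_equation_det (W := toMat g) hb hbz hNn hε.le hg fun i => (hcon i).le)
    (not_le.2 hlt)

theorem tendsto_zero_of_forall_inv {X : ℕ → ℝ} {Y : ℕ → ℝ} {K : ℝ} (hK : 0 < K)
    (hY : Tendsto Y atTop (𝓝 0))
    (h : ∀ j : ℕ, ∀ᶠ n in atTop, |X n| ≤ (1 / ((j : ℝ) + 1) + Y n) * K) :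
    Tendsto X atTop (𝓝 0) := by
  rw [Metric.tendsto_nhds]
  intro ε hε
  obtain ⟨j, hj⟩ := exists_nat_one_div_lt (show 0 < ε / (2 * K) by positivity)
  filter_upwards [h j, hY.eventually_lt_const (show 0 < ε / (2 * K) by positivity)] with n h1 h2
  rw [Real.dist_eq, sub_zero]
  calc |X n| ≤ _ := h1
    _ < (ε / (2 * K) + ε / (2 * K)) * K := by gcongr
    _ = ε := by field_simp; ring

namespace NoiseBlocks

variable {k : ℕ} {γ : ℝ} {p : ℕ → ℕ} {Ω : Type*} [MeasurableSpace Ω] {P : Measure Ω}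

theorem tendsto_p_div (B : NoiseBlocks k γ p Ω P) (hγ : 1 ≤ γ) :
    Tendsto (fun n : ℕ => ((p n - k : ℕ) : ℝ) / n) atTop (𝓝 γ⁻¹) := by
  have h1 : Tendsto (fun n : ℕ => (p n : ℝ) / n) atTop (𝓝 γ⁻¹) := by
    have := B.aspect.inv₀ (by positivity)
    simpa [inv_div] using this
  have h2 : Tendsto (fun n : ℕ => (p n : ℝ) / n - k / n) atTop (𝓝 (γ⁻¹ - 0)) :=
    h1.sub (tendsto_const_div_atTop_nhds_zero_nat _)
  rw [sub_zero] at h2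
  refine h2.congr' ?_
  filter_upwards [B.pTop.eventually_ge_atTop k] with n hn
  rw [Nat.cast_sub hn, sub_div]

theorem tendsto_sub_div (k : ℕ) :
    Tendsto (fun n : ℕ => ((n - k : ℕ) : ℝ) / n) atTop (𝓝 1) := by
  have h2 : Tendsto (fun n : ℕ => (1 : ℝ) - k / n) atTop (𝓝 (1 - 0)) :=
    tendsto_const_nhds.sub (tendsto_const_div_atTop_nhds_zero_nat _)
  rw [sub_zero] at h2
  refine h2.congr' ?_
  filter_upwards [eventually_ge_atTop (k + 1)] with n hn
  have : (n : ℝ) ≠ 0 := by norm_cast; omega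
  rw [Nat.cast_sub (by omega), sub_div, div_self this]

theorem eventually_p_le (B : NoiseBlocks k γ p Ω P) (hγ : 1 ≤ γ) {ρ : ℝ} (hρ : γ⁻¹ < ρ) :
    ∀ᶠ n : ℕ in atTop, ((p n - k : ℕ) : ℝ) ≤ ρ * n := by
  filter_upwards [(B.tendsto_p_div hγ).eventually_lt_const hρ, eventually_ge_atTop 1] with n h1 h2
  have : (0 : ℝ) < n := by exact_mod_cast h2
  rw [div_lt_iff₀ this] at h1
  exact h1.le

theorem W_measure_le [IsProbabilityMeasure P] (B : NoiseBlocks k γ p Ω P) (n : ℕ)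
    (S : Set (Fin (n - k) × Fin (p n - k) → ℝ)) :
    P {ω | matEntries (B.W n ω) ∈ S} ≤ gPi (Fin (n - k) × Fin (p n - k)) S := by
  have h : P.map (fun ω => matEntries (B.W n ω)) = gPi _ := B.Wgauss n
  have hm : AEMeasurable (fun ω => matEntries (B.W n ω)) P :=
    AEMeasurable.of_map_ne_zero (by rw [h]; exact IsProbabilityMeasure.ne_zero _)
  rw [← h]
  exact Measure.le_map_apply hm S

/-- Almost surely, `‖W‖²/n` is eventually below any `b > b_γ`. -/
theorem good_as [IsProbabilityMeasure P] (B : NoiseBlocks k γ p Ω P) (hγ : 1 ≤ γ) {b : ℝ}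
    (hb : bGamma γ < b) :
    ∀ᵐ ω ∂P, ∀ᶠ n : ℕ in atTop,
      matEntries (B.W n ω) ∈ goodSet (n - k) (p n - k) (n * b) := by
  have hb' : (1 + √γ⁻¹) ^ 2 < b := by
    rw [Real.sqrt_inv, ← one_div]; exact hb
  obtain ⟨ρ', c, hρ, hc, h⟩ := wishart_edge (by positivity) hb'
  have := borel_cantelli_exp (P := P) (A := 4) (c := c)
    (S := fun n => {ω | matEntries (B.W n ω) ∈ (goodSet (n - k) (p n - k) (n * b))ᶜ}) hc (by
      filter_upwards [B.eventually_p_le hγ hρ, eventually_ge_atTop 1] with n h1 h2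
      exact (B.W_measure_le n _).trans (h n (n - k) (p n - k) h2 (Nat.sub_le _ _) h1))
  filter_upwards [this] with ω hω
  filter_upwards [hω] with n hn
  simpa using hn

/-- Almost surely, on the event that the edge bound eventually holds, the resolvent trace satisfies
the limiting Marchenko–Pastur equation asymptotically. -/
theorem mp_equation_as [IsProbabilityMeasure P] (B : NoiseBlocks k γ p Ω P) (hγ : 1 ≤ γ)
    {b z : ℝ} (hb : 0 ≤ b) (hbz : b < z) :
    ∀ᵐ ω ∂P, (∀ᶠ n : ℕ in atTop, matEntries (B.W n ω) ∈ goodSet (n - k) (p n - k) (n * b)) →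
      Tendsto (fun n : ℕ => (1 - (resv (n * z) (B.W n ω)).trace) *
        (z * (resv (n * z) (B.W n ω)).trace - γ⁻¹) - (resv (n * z) (B.W n ω)).trace)
        atTop (𝓝 0) := by
  have hγ0 : 0 < γ⁻¹ := by positivity
  have hzb : 0 < z - b := sub_pos.2 hbz
  have key : ∀ j : ℕ, ∀ᵐ ω ∂P, ∀ᶠ n : ℕ in atTop,
      ¬ (matEntries (B.W n ω) ∈ goodSet (n - k) (p n - k) (n * b) ∧
        (1 / ((j : ℝ) + 1) + b / (z - b) ^ 2 / n) * (1 + b / (z - b)) <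
          |(1 - (resv (n * z) (B.W n ω)).trace) * (z * (resv (n * z) (B.W n ω)).trace
            - (p n - k : ℕ) / n) - (n - k : ℕ) / n * (resv (n * z) (B.W n ω)).trace|) := by
    intro j
    obtain ⟨c, hc, h⟩ := mp_equation_prob (C := γ⁻¹ + 1) (ε := 1 / ((j : ℝ) + 1)) hb hbz
      (by positivity) (by positivity)
    refine borel_cantelli_exp (P := P) (A := 2) (c := c) hc ?_
    filter_upwards [B.eventually_p_le hγ (lt_add_one _), eventually_ge_atTop (k + 1)] with n h1 h2
    exact (B.W_measure_le n _).trans (h n (n - k) (p n - k) (by omega) (Nat.sub_le _ _) h1)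
  rw [← ae_all_iff] at key
  filter_upwards [key] with ω hω hgood
  set T : ℕ → ℝ := fun n => (resv (n * z) (B.W n ω)).trace with hT
  have hX : Tendsto (fun n : ℕ => (1 - T n) * (z * T n - (p n - k : ℕ) / n)
      - (n - k : ℕ) / n * T n) atTop (𝓝 0) := by
    refine tendsto_zero_of_forall_inv (K := 1 + b / (z - b))
      (Y := fun n : ℕ => b / (z - b) ^ 2 / n) (by positivity)
      (tendsto_const_div_atTop_nhds_zero_nat _) fun j => ?_
    filter_upwards [hω j, hgood] with n h1 h2
    by_contra! hcon
    exact h1 ⟨h2, hcon⟩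
  have hbd : ∀ᶠ n in atTop, |T n| ≤ (γ⁻¹ + 1) * (z - b)⁻¹ := by
    filter_upwards [hgood, eventually_ge_atTop 1,
      (B.tendsto_p_div hγ).eventually_lt_const (lt_add_one γ⁻¹)] with n h1 h2 h3
    have := trace_resv_bounds h2 hbz h1
    rw [abs_of_nonneg this.2.1]
    refine this.2.2.trans ?_
    gcongr
  have hTb : IsBoundedUnder (· ≤ ·) atTop (norm ∘ T) :=
    ⟨(γ⁻¹ + 1) * (z - b)⁻¹, by simpa [eventually_map] using hbd⟩
  have hTb' : IsBoundedUnder (· ≤ ·) atTop (norm ∘ fun n => 1 - T n) := by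
    refine ⟨1 + (γ⁻¹ + 1) * (z - b)⁻¹, ?_⟩
    simp only [eventually_map, Function.comp, Real.norm_eq_abs]
    filter_upwards [hbd] with n hn
    calc |1 - T n| ≤ |1| + |T n| := abs_sub _ _
      _ ≤ _ := by rw [abs_one]; linarith
  have e1 : Tendsto (fun n : ℕ => ((p n - k : ℕ) : ℝ) / n - γ⁻¹) atTop (𝓝 0) := by
    simpa using (B.tendsto_p_div hγ).sub_const γ⁻¹
  have e2 : Tendsto (fun n : ℕ => ((n - k : ℕ) : ℝ) / n - 1) atTop (𝓝 0) := by
    simpa using (tendsto_sub_div k).sub_const 1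
  have f1 := e1.zero_mul_isBoundedUnder_le hTb'
  have f2 := e2.zero_mul_isBoundedUnder_le hTb
  have := (hX.add f1).add f2
  simp only [add_zero] at this
  refine this.congr fun n => ?_
  ring

end NoiseBlocks

/-! ### Almost sure limits for the noise blocks -/

namespace NoiseBlocks

variable {k : ℕ} {γ : ℝ} {p : ℕ → ℕ} {Ω : Type*} [MeasurableSpace Ω] {P : Measure Ω}

theorem lam_eq (B : NoiseBlocks k γ p Ω P) {n : ℕ} (hn : 1 ≤ n) (ω : Ω) (α : Fin (p n - k)) :
    B.lam n ω α = ithEigDesc ((B.W n ω)ᵀ * B.W n ω) α / n := by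
  have hn0 : (n : ℝ) ≠ 0 := by norm_cast; omega
  rw [← B.lamEig n ω α, mul_div_cancel_left₀ _ hn0]

/-- The empirical Stieltjes transform of the `λ_{n,α}` converges almost surely. The limit solves
the Marchenko–Pastur quadratic equation; the correct root is selected by comparing with the
equation at a second point `z' ∈ (b, z)`. -/
theorem stieltjes_as [IsProbabilityMeasure P] (B : NoiseBlocks k γ p Ω P) (hγ : 1 ≤ γ) {z : ℝ}
    (hz : bGamma γ < z) :
    ∃ b : ℝ, 0 < b ∧ b < z ∧ ∀ᵐ ω ∂P,
      (∀ᶠ n : ℕ in atTop, matEntries (B.W n ω) ∈ goodSet (n - k) (p n - k) (n * b)) ∧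
      Tendsto (fun n : ℕ => 1 / (n : ℝ) * ∑ α, (B.lam n ω α - z)⁻¹) atTop
        (𝓝 (γ⁻¹ * mpStieltjes γ z)) := by
  have hγ0 : 0 < γ := by linarith
  set q := 1 / √γ with hq
  have hq0 : 0 < q := by positivity
  have hq2 : q ^ 2 = γ⁻¹ := by rw [hq, div_pow, Real.sq_sqrt hγ0.le]; simp
  have hbg : bGamma γ = (1 + q) ^ 2 := rfl
  obtain ⟨κ, hκ, hzκ⟩ := exists_kappa hq0 (hbg ▸ hz)
  set κ' := (q + κ) / 2 with hκ'
  have h1 : q < κ' := by rw [hκ']; linarith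
  have h2 : κ' < κ := by rw [hκ']; linarith
  set z' := (κ' + 1) * (κ' + q ^ 2) / κ' with hz'
  have hz'z : z' < z := by rw [hzκ]; exact kappa_mono hq0 h1.le h2
  have hbz' : bGamma γ < z' := by
    have := kappa_mono hq0 le_rfl h1
    rw [hbg]
    refine lt_of_eq_of_lt ?_ this
    field_simp
    ring
  obtain ⟨b, hb1, hb2⟩ := exists_between hbz'
  have hb0 : 0 < b := lt_of_le_of_lt (by rw [hbg]; positivity) hb1
  refine ⟨b, hb0, hb2.trans hz'z, ?_⟩
  filter_upwards [B.good_as hγ hb1, B.mp_equation_as hγ hb0.le (hb2.trans hz'z),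
    B.mp_equation_as hγ hb0.le hb2] with ω hg e e'
  refine ⟨hg, ?_⟩
  rw [hq2] at hzκ hz'
  have hlim := root_select (c := γ⁻¹) (by positivity) (hq0.trans h1)
    (by rw [← hq2]; gcongr) h2 hzκ hz' (e hg) (e' hg) (by
      filter_upwards [hg, eventually_ge_atTop 1] with n h3 h4
      exact trace_resv_anti h4 hb2 hz'z.le h3)
  rw [mpStieltjes_formula hγ hκ hzκ, neg_div]
  refine hlim.neg.congr' ?_
  filter_upwards [hg, eventually_ge_atTop 1] with n h3 h4
  have hn0 : (0 : ℝ) < n := by exact_mod_cast h4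
  rw [(trace_resv_bounds h4 (hb2.trans hz'z) h3).1, Finset.mul_sum, ← Finset.sum_neg_distrib]
  refine Finset.sum_congr rfl fun α _ => ?_
  rw [← B.lamEig n ω α, ← mul_sub, mul_inv, ← neg_sub z (B.lam n ω α), inv_neg]
  ring

/-- The two noise blocks gathered in one array. -/
def noise (B : NoiseBlocks k γ p Ω P) (n : ℕ) (ω : Ω) :
    (Fin k × Fin (p n - k)) ⊕ (Fin (p n - k) × Fin k) → ℝ :=
  Sum.elim (matEntries (B.E12 n ω)) (matEntries (B.E21 n ω))

theorem measurable_matEntries {m n : Type*} :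
    Measurable (matEntries : Matrix m n ℝ → m × n → ℝ) := by
  refine measurable_pi_lambda _ fun q => ?_
  exact (measurable_pi_apply q.2).comp (measurable_pi_apply q.1)

theorem noise_law [IsProbabilityMeasure P] (B : NoiseBlocks k γ p Ω P) (n : ℕ) :
    AEMeasurable (fun ω => (matEntries (B.W n ω), B.noise n ω)) P ∧
    P.map (fun ω => (matEntries (B.W n ω), B.noise n ω)) =
      (gPi (Fin (n - k) × Fin (p n - k))).prod
        (gPi ((Fin k × Fin (p n - k)) ⊕ (Fin (p n - k) × Fin k))) := by
  refine joint_law (a := fun ω => matEntries (B.E12 n ω)) (b := fun ω => matEntries (B.E21 n ω))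
    (w := fun ω => matEntries (B.W n ω)) (B.E12gauss n) (B.E21gauss n) (B.Wgauss n) ?_ ?_
  · exact (B.indep1 n).comp measurable_matEntries
      (measurable_matEntries.prodMap measurable_matEntries)
  · exact (B.indep2 n).comp measurable_matEntries measurable_matEntries

/-- Weighted products of the noise, with weights bounded functions of `W`, are almost surely
asymptotic to their conditional means given `W`. -/
theorem weighted_as [IsProbabilityMeasure P] (B : NoiseBlocks k γ p Ω P) (hk : 1 ≤ k)
    (hγ : 1 ≤ γ) {b D : ℝ} (hD : 0 < D)
    (u v : ∀ n, Fin (p n - k) → (Fin k × Fin (p n - k)) ⊕ (Fin (p n - k) × Fin k))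
    (hu : ∀ n, (u n).Injective) (hv : ∀ n, (v n).Injective)
    (d : ∀ n, (Fin (n - k) × Fin (p n - k) → ℝ) → Fin (p n - k) → ℝ)
    (hd : ∀ n, Measurable (d n))
    (hdD : ∀ n, 1 ≤ n → ∀ w ∈ goodSet (n - k) (p n - k) (n * b), ∀ α, |d n w α| ≤ D) :
    ∀ᵐ ω ∂P, (∀ᶠ n : ℕ in atTop, matEntries (B.W n ω) ∈ goodSet (n - k) (p n - k) (n * b)) →
      Tendsto (fun n : ℕ => 1 / (n : ℝ) *
        (∑ α, d n (matEntries (B.W n ω)) α * (B.noise n ω (u n α) * B.noise n ω (v n α))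
          - ∑ α, if u n α = v n α then d n (matEntries (B.W n ω)) α else 0)) atTop (𝓝 0) := by
  have hγ0 : 0 < γ⁻¹ := by positivity
  have hk0 : (0 : ℝ) < k := by exact_mod_cast hk
  have key : ∀ j : ℕ, ∀ᵐ ω ∂P, ∀ᶠ n : ℕ in atTop,
      ¬ (matEntries (B.W n ω) ∈ goodSet (n - k) (p n - k) (n * b) ∧ 1 / ((j : ℝ) + 1) * n ≤
        |∑ α, d n (matEntries (B.W n ω)) α * (B.noise n ω (u n α) * B.noise n ω (v n α))
          - ∑ α, if u n α = v n α then d n (matEntries (B.W n ω)) α else 0|) := by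
    intro j
    obtain ⟨c, hc, h⟩ := random_weight_exp (D := D) (C := 2 * k * (γ⁻¹ + 1))
      (ε := 1 / ((j : ℝ) + 1)) hD (by positivity) (by positivity)
    refine borel_cantelli_exp (P := P) (A := 2) (c := c) hc ?_
    filter_upwards [B.eventually_p_le hγ (lt_add_one _), eventually_ge_atTop 1] with n h1 h2
    obtain ⟨hm, hlaw⟩ := B.noise_law n
    have hcard : (Fintype.card ((Fin k × Fin (p n - k)) ⊕ (Fin (p n - k) × Fin k)) : ℝ)
        ≤ 2 * k * (γ⁻¹ + 1) * n := by
      simp only [Fintype.card_sum, Fintype.card_prod, Fintype.card_fin]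
      push_cast
      nlinarith
    have hn1 : (1 : ℝ) ≤ n := by exact_mod_cast h2
    have h3 := h _ _ n (p n - k) (u n) (v n) (d n) (goodSet (n - k) (p n - k) (n * b)) hcard
      (hu n) (hv n) (hd n) (measurableSet_good _ _ _) (hdD n h2)
    rw [← hlaw] at h3
    refine (Measure.le_map_apply hm _).trans (h3.trans (ENNReal.ofReal_le_ofReal ?_))
    have := Real.exp_pos (-c * n)
    nlinarith
  rw [← ae_all_iff] at key
  filter_upwards [key] with ω hω hgood
  refine tendsto_zero_of_forall_inv (K := 1) (Y := fun _ => 0) one_pos tendsto_const_nhds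
    fun j => ?_
  filter_upwards [hω j, hgood, eventually_ge_atTop 1] with n h1 h2 h3
  have hn0 : (0 : ℝ) < n := by exact_mod_cast h3
  have h4 := lt_of_not_ge fun hcon => h1 ⟨h2, hcon⟩
  rw [abs_mul, abs_of_pos (by positivity), add_zero, mul_one, div_mul_eq_mul_div, one_mul,
    div_le_iff₀ hn0]
  exact h4.le

end NoiseBlocks

theorem diagonal_sub_smul_inv {m : ℕ} {l : Fin m → ℝ} {z : ℝ} (h : ∀ α, l α - z ≠ 0) :
    (Matrix.diagonal l - z • (1 : Matrix (Fin m) (Fin m) ℝ))⁻¹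
      = Matrix.diagonal fun α => (l α - z)⁻¹ := by
  apply Matrix.inv_eq_right_inv
  rw [Matrix.smul_one_eq_diagonal, Matrix.diagonal_sub, Matrix.diagonal_mul_diagonal]
  simp only [mul_inv_cancel₀ (h _)]
  exact Matrix.diagonal_one

/-! ### Conclusion -/

/-- For every real `z > b_γ`, almost surely, as `n → ∞`:
`(1/n) E₁₂ (Λ_n − z I)⁻¹ E₁₂ᵀ → γ⁻¹ m(z) I_k`, `(1/n) E₂₁ᵀ (Λ_n − z I)⁻¹ E₂₁ → γ⁻¹ m(z) I_k`,
and `(1/n) E₁₂ (Λ_n − z I)⁻¹ Λ_n^{1/2} E₂₁ → 0` (entrywise). -/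
theorem weighted_noise_products_as_limits
    {k : ℕ} (hk : 1 ≤ k) {γ : ℝ} (hγ : 1 ≤ γ)
    {p : ℕ → ℕ} {Ω : Type*} [MeasurableSpace Ω] {P : Measure Ω} [IsProbabilityMeasure P]
    (B : NoiseBlocks k γ p Ω P) (z : ℝ) (hz : bGamma γ < z) :
    ∀ᵐ ω ∂P, ∀ i j : Fin k,
      Tendsto (fun n => B.q1 n ω z i j) atTop
        (𝓝 (((γ⁻¹ * mpStieltjes γ z) • (1 : Matrix (Fin k) (Fin k) ℝ)) i j))
      ∧ Tendsto (fun n => B.q2 n ω z i j) atTop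
        (𝓝 (((γ⁻¹ * mpStieltjes γ z) • (1 : Matrix (Fin k) (Fin k) ℝ)) i j))
      ∧ Tendsto (fun n => B.q3 n ω z i j) atTop (𝓝 0) := by
  obtain ⟨b, hb0, hbz, hst⟩ := B.stieltjes_as hγ hz
  have hzb : 0 < z - b := sub_pos.2 hbz
  -- the eigenvalues `λ_{n,α}` as functions of the entries of `W`, and the two kinds of weights
  set l : ∀ n, (Fin (n - k) × Fin (p n - k) → ℝ) → Fin (p n - k) → ℝ :=
    fun n w α => ithEigDesc ((toMat w)ᵀ * toMat w) α / n with hl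
  set d : ∀ n, (Fin (n - k) × Fin (p n - k) → ℝ) → Fin (p n - k) → ℝ :=
    fun n w α => (l n w α - z)⁻¹ with hd
  set d' : ∀ n, (Fin (n - k) × Fin (p n - k) → ℝ) → Fin (p n - k) → ℝ :=
    fun n w α => (l n w α - z)⁻¹ * √(l n w α) with hd'
  have ml : ∀ n α, Measurable fun w => l n w α := fun n α =>
    ((measurable_pi_apply α).comp (measurable_eigs (n - k) (p n - k))).div_const _
  have md : ∀ n, Measurable (d n) := fun n =>
    measurable_pi_lambda _ fun α => ((ml n α).sub_const z).inv
  have md' : ∀ n, Measurable (d' n) := fun n =>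
    measurable_pi_lambda _ fun α => ((ml n α).sub_const z).inv.mul (ml n α).sqrt
  have lb : ∀ n, 1 ≤ n → ∀ w ∈ goodSet (n - k) (p n - k) (n * b), ∀ α, l n w α ≤ b := by
    intro n hn w hw α
    have hn0 : (0 : ℝ) < n := by exact_mod_cast hn
    have := (ithEigDesc_bounds (W := toMat w) hw α).2
    rw [hl, div_le_iff₀ hn0, mul_comm]
    exact this
  have bd : ∀ n, 1 ≤ n → ∀ w ∈ goodSet (n - k) (p n - k) (n * b), ∀ α,
      |d n w α| ≤ (z - b)⁻¹ := by
    intro n hn w hw α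
    have := lb n hn w hw α
    rw [hd, abs_inv, abs_sub_comm, abs_of_pos (by linarith)]
    exact inv_anti₀ hzb (by linarith)
  have bd' : ∀ n, 1 ≤ n → ∀ w ∈ goodSet (n - k) (p n - k) (n * b), ∀ α,
      |d' n w α| ≤ (z - b)⁻¹ * √b := by
    intro n hn w hw α
    rw [hd', abs_mul, abs_of_nonneg (Real.sqrt_nonneg _)]
    exact mul_le_mul (bd n hn w hw α) (Real.sqrt_le_sqrt (lb n hn w hw α)) (Real.sqrt_nonneg _)
      (by positivity)
  have i1 : ∀ (i : Fin k) n, Function.Injective fun α : Fin (p n - k) =>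
      (Sum.inl (i, α) : (Fin k × Fin (p n - k)) ⊕ (Fin (p n - k) × Fin k)) := by
    intro i n α β h; simpa using h
  have i2 : ∀ (i : Fin k) n, Function.Injective fun α : Fin (p n - k) =>
      (Sum.inr (α, i) : (Fin k × Fin (p n - k)) ⊕ (Fin (p n - k) × Fin k)) := by
    intro i n α β h; simpa using h
  have a1 : ∀ i j : Fin k, _ := fun i j => B.weighted_as hk hγ (inv_pos.2 hzb)
    (fun n α => Sum.inl (i, α)) (fun n α => Sum.inl (j, α)) (i1 i) (i1 j) d md bd
  have a2 : ∀ i j : Fin k, _ := fun i j => B.weighted_as hk hγ (inv_pos.2 hzb)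
    (fun n α => Sum.inr (α, i)) (fun n α => Sum.inr (α, j)) (i2 i) (i2 j) d md bd
  have a3 : ∀ i j : Fin k, _ := fun i j => B.weighted_as hk hγ
    (mul_pos (inv_pos.2 hzb) (Real.sqrt_pos.2 hb0))
    (fun n α => Sum.inl (i, α)) (fun n α => Sum.inr (α, j)) (i1 i) (i2 j) d' md' bd'
  simp only [← ae_all_iff] at a1 a2 a3
  filter_upwards [hst, a1, a2, a3] with ω ⟨hg, hT⟩ h1 h2 h3 i j
  have hlam : ∀ᶠ n : ℕ in atTop, B.lam n ω = l n (matEntries (B.W n ω)) := by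
    filter_upwards [eventually_ge_atTop 1] with n hn
    funext α
    exact B.lam_eq hn ω α
  have hinv : ∀ᶠ n : ℕ in atTop, (Matrix.diagonal (B.lam n ω) - z • 1)⁻¹
      = Matrix.diagonal (d n (matEntries (B.W n ω))) := by
    filter_upwards [hlam, hg, eventually_ge_atTop 1] with n hn hgn h1n
    rw [hn]
    apply diagonal_sub_smul_inv
    intro α
    have := lb n h1n _ hgn α
    linarith
  -- the conditional means
  have hmean : Tendsto (fun n : ℕ => 1 / (n : ℝ) *
      ∑ α : Fin (p n - k), if i = j then d n (matEntries (B.W n ω)) α else 0) atTop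
      (𝓝 (((γ⁻¹ * mpStieltjes γ z) • (1 : Matrix (Fin k) (Fin k) ℝ)) i j)) := by
    by_cases hij : i = j
    · simp only [hij, if_true, Matrix.smul_apply, Matrix.one_apply_eq, smul_eq_mul, mul_one]
      refine hT.congr' ?_
      filter_upwards [hlam] with n hn
      rw [hn]
    · simp [hij]
  refine ⟨?_, ?_, ?_⟩
  · have := (h1 i j hg).add hmean
    rw [zero_add] at this
    refine this.congr' ?_
    filter_upwards [hinv] with n hn
    rw [NoiseBlocks.q1, hn, Matrix.smul_apply, Matrix.mul_apply]
    simp only [Matrix.mul_diagonal,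
      Matrix.transpose_apply, smul_eq_mul, NoiseBlocks.noise, Sum.elim_inl, matEntries,
      Sum.inl.injEq, Prod.mk.injEq, and_true]
    rw [← mul_add, sub_add_cancel]
    congr 1
    exact Finset.sum_congr rfl fun α _ => by ring
  · have := (h2 i j hg).add hmean
    rw [zero_add] at this
    refine this.congr' ?_
    filter_upwards [hinv] with n hn
    rw [NoiseBlocks.q2, hn, Matrix.smul_apply, Matrix.mul_apply]
    simp only [Matrix.mul_diagonal,
      Matrix.transpose_apply, smul_eq_mul, NoiseBlocks.noise, Sum.elim_inr, matEntries,
      Sum.inr.injEq, Prod.mk.injEq, true_and]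
    rw [← mul_add, sub_add_cancel]
    congr 1
    exact Finset.sum_congr rfl fun α _ => by ring
  · refine (h3 i j hg).congr' ?_
    filter_upwards [hinv, hlam] with n hn hln
    rw [NoiseBlocks.q3, hn, hln, Matrix.smul_apply, Matrix.mul_apply]
    simp only [Matrix.mul_diagonal,
      smul_eq_mul, NoiseBlocks.noise, Sum.elim_inr, Sum.elim_inl, matEntries,
      reduceCtorEq, if_false, Finset.sum_const_zero, sub_zero]
    congr 1
    exact Finset.sum_congr rfl fun α _ => by simp only [hd, hd']; ring
end
end

section
/- Let A be a real symmetric k×k matrix, let x ∈ ℝ^k with ‖x‖₂ = 1, let z ∈ ℝ, and set r = A·x − z·x. Suppose there is a set L of k−1 eigenvalues of A (counted with multiplicity) such that δ = min_{l ∈ L} |l − z| > 0 and ‖r‖₂ ≤ δ. Then there exists an eigenvalue z_0 of A with unit eigenvector x_0 such that xᵀ·x_0 ≥ √(1 − ‖r‖₂²/δ²) and |z − z_0| ≤ ‖r‖₂. -/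
/-!
Expand `x` in the orthonormal eigenbasis `(v i)` of `A`, with coefficients `c i = ⟨x, v i⟩`.
The residual `r = A x - z x` has coefficients `(λ i - z) * c i`, so Parseval gives
`∑ c i ^ 2 = 1` and `∑ (λ i - z) ^ 2 * c i ^ 2 = ‖r‖ ^ 2`. Since `‖r‖ ^ 2` is a weighted mean of the
`(λ i - z) ^ 2`, some index `i` satisfies `|λ i - z| ≤ ‖r‖`, and `± v i`, with the sign making its
inner product with `x` equal to `|c i|`, is the required eigenvector. If `i ∈ L`, then `δ ≤ ‖r‖`
and the lower bound on the inner product is `0`. Otherwise `L` consists of all the other indices,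
so `δ ^ 2 * (1 - c i ^ 2) ≤ ‖r‖ ^ 2`.
-/

open MeasureTheory ProbabilityTheory Filter Matrix Topology

noncomputable section

/-- Parseval's identity in the eigenbasis of a real symmetric matrix, in coordinates. -/
lemma sum_dotProduct_eigenvectorBasis_sq {k : ℕ} {A : Matrix (Fin k) (Fin k) ℝ}
    (hA : A.IsHermitian) (y : Fin k → ℝ) :
    ∑ i, (y ⬝ᵥ ⇑(hA.eigenvectorBasis i)) ^ 2 = ∑ j, y j ^ 2 := by
  have h := hA.eigenvectorBasis.sum_sq_inner_right (WithLp.toLp 2 y)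
  rw [EuclideanSpace.real_norm_sq_eq] at h
  simpa [EuclideanSpace.inner_eq_star_dotProduct] using h

/-- The coefficients of the residual `A x - z x` in the eigenbasis of `A`. -/
lemma residual_dotProduct_eigenvectorBasis {k : ℕ} {A : Matrix (Fin k) (Fin k) ℝ}
    (hA : A.IsHermitian) (x : Fin k → ℝ) (z : ℝ) (i : Fin k) :
    (A *ᵥ x - z • x) ⬝ᵥ ⇑(hA.eigenvectorBasis i)
      = (hA.eigenvalues i - z) * (x ⬝ᵥ ⇑(hA.eigenvectorBasis i)) := by
  have hT : Aᵀ = A := by simpa [Matrix.IsHermitian] using hA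
  have h : (A *ᵥ x) ⬝ᵥ ⇑(hA.eigenvectorBasis i)
      = hA.eigenvalues i * (x ⬝ᵥ ⇑(hA.eigenvectorBasis i)) := by
    rw [← Matrix.vecMul_transpose, hT, ← Matrix.dotProduct_mulVec, hA.mulVec_eigenvectorBasis,
      dotProduct_smul, smul_eq_mul]
  rw [sub_dotProduct, h, smul_dotProduct, smul_eq_mul]
  ring

/-- Multiplying a unit eigenvector `v` by a sign makes its inner product with `x` equal to
`|⟨x, v⟩|`. -/
lemma exists_unit_eigenvector_dotProduct_eq_abs {k : ℕ} {A : Matrix (Fin k) (Fin k) ℝ}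
    (hA : A.IsHermitian) (x : Fin k → ℝ) (i : Fin k) :
    ∃ x₀ : Fin k → ℝ, A *ᵥ x₀ = hA.eigenvalues i • x₀ ∧ ∑ j, x₀ j ^ 2 = 1 ∧
      ∑ j, x j * x₀ j = |x ⬝ᵥ ⇑(hA.eigenvectorBasis i)| := by
  have hv : ∑ j, hA.eigenvectorBasis i j ^ 2 = 1 := by
    rw [← EuclideanSpace.real_norm_sq_eq, hA.eigenvectorBasis.orthonormal.norm_eq_one, one_pow]
  rcases abs_cases (x ⬝ᵥ ⇑(hA.eigenvectorBasis i)) with ⟨h, -⟩ | ⟨h, -⟩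
  · exact ⟨⇑(hA.eigenvectorBasis i), hA.mulVec_eigenvectorBasis i, hv, h.symm⟩
  · refine ⟨-⇑(hA.eigenvectorBasis i), ?_, ?_, ?_⟩
    · rw [Matrix.mulVec_neg, hA.mulVec_eigenvectorBasis, smul_neg]
    · simpa using hv
    · rw [h, ← dotProduct_neg]
      rfl

/-- (A consequence of the `sin Θ` theorem.) Let `A` be a real symmetric
`k × k` matrix, `x` a unit vector, `z ∈ ℝ` and `r = A x − z x`. If there is a set `L` of
`k − 1` eigenvalues of `A` (counted with multiplicity, indexed by a subset of indices of an
eigenvalue enumeration) all at distance at least `δ > 0` from `z`, and `‖r‖₂ ≤ δ`, then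
there is an eigenpair `(z₀, x₀)` of `A` with `‖x₀‖₂ = 1`, `xᵀ x₀ ≥ √(1 − ‖r‖₂²/δ²)` and
`|z − z₀| ≤ ‖r‖₂`. -/
theorem approx_eigenpair
    {k : ℕ} (A : Matrix (Fin k) (Fin k) ℝ) (hA : A.IsHermitian)
    (x : Fin k → ℝ) (hx : ∑ j, x j ^ 2 = 1) (z : ℝ)
    (r : Fin k → ℝ) (hr : r = A *ᵥ x - z • x)
    (L : Finset (Fin k)) (hL : L.card = k - 1)
    (δ : ℝ) (hδpos : 0 < δ)
    (hδ : ∀ i ∈ L, δ ≤ |hA.eigenvalues i - z|)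
    (hrsmall : Real.sqrt (∑ j, r j ^ 2) ≤ δ) :
    ∃ (z₀ : ℝ) (x₀ : Fin k → ℝ),
      A *ᵥ x₀ = z₀ • x₀ ∧ (∑ j, x₀ j ^ 2) = 1 ∧
      Real.sqrt (1 - (∑ j, r j ^ 2) / δ ^ 2) ≤ ∑ j, x j * x₀ j ∧
      |z - z₀| ≤ Real.sqrt (∑ j, r j ^ 2) := by
  have hparx := sum_dotProduct_eigenvectorBasis_sq hA x
  have hparr := sum_dotProduct_eigenvectorBasis_sq hA r
  simp_rw [hr, residual_dotProduct_eigenvectorBasis, ← hr] at hparr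
  rw [hx] at hparx
  set c : Fin k → ℝ := fun i => x ⬝ᵥ ⇑(hA.eigenvectorBasis i) with hc
  change ∑ i, c i ^ 2 = 1 at hparx
  change ∑ i, ((hA.eigenvalues i - z) * c i) ^ 2 = _ at hparr
  have hR0 : 0 ≤ ∑ j, r j ^ 2 := Finset.sum_nonneg fun j _ => sq_nonneg _
  set R : ℝ := ∑ j, r j ^ 2 with hR
  obtain ⟨i, hi⟩ : ∃ i, (hA.eigenvalues i - z) ^ 2 ≤ R := by
    by_contra! hcon
    -- Some coefficient is nonzero, which makes the weighted-mean inequality strict.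
    obtain ⟨m, hm⟩ : ∃ m, c m ≠ 0 := by
      by_contra! h0
      simp [h0] at hparx
    have hlt : ∑ i, R * c i ^ 2 < ∑ i, ((hA.eigenvalues i - z) * c i) ^ 2 := by
      refine Finset.sum_lt_sum (fun i _ => ?_) ⟨m, Finset.mem_univ m, ?_⟩
      · rw [mul_pow]
        exact mul_le_mul_of_nonneg_right (hcon i).le (sq_nonneg _)
      · rw [mul_pow]
        exact mul_lt_mul_of_pos_right (hcon m) (by positivity)
    rw [← Finset.mul_sum, hparx, hparr, mul_one] at hlt
    exact lt_irrefl _ hlt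
  obtain ⟨x₀, hx₀, hunit, hdot⟩ := exists_unit_eigenvector_dotProduct_eq_abs hA x i
  refine ⟨hA.eigenvalues i, x₀, hx₀, hunit, ?_, ?_⟩
  · rw [hdot]
    refine Real.sqrt_le_iff.mpr ⟨abs_nonneg _, ?_⟩
    rw [sq_abs]
    change 1 - R / δ ^ 2 ≤ c i ^ 2
    rw [sub_le_comm, le_div_iff₀ (by positivity)]
    by_cases hiL : i ∈ L
    · have h1 : δ ^ 2 ≤ R := by
        refine le_trans ?_ hi
        rw [← sq_abs (hA.eigenvalues i - z)]
        exact pow_le_pow_left₀ hδpos.le (hδ i hiL) 2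
      nlinarith [mul_nonneg (sq_nonneg (c i)) (sq_nonneg δ)]
    · have hL' : L = Finset.univ.erase i := by
        refine Finset.eq_of_subset_of_card_le (fun m hm => ?_) ?_
        · exact Finset.mem_erase.mpr ⟨fun h => hiL (h ▸ hm), Finset.mem_univ m⟩
        · rw [Finset.card_erase_of_mem (Finset.mem_univ i), hL, Finset.card_fin]
      have hsum : 1 - c i ^ 2 = ∑ m ∈ L, c m ^ 2 := by
        rw [hL', ← hparx, ← Finset.add_sum_erase _ _ (Finset.mem_univ i)]
        ring
      calc (1 - c i ^ 2) * δ ^ 2 = ∑ m ∈ L, c m ^ 2 * δ ^ 2 := by rw [hsum, Finset.sum_mul]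
        _ ≤ ∑ m ∈ L, ((hA.eigenvalues m - z) * c m) ^ 2 := by
          refine Finset.sum_le_sum fun m hm => ?_
          rw [mul_pow, mul_comm, ← sq_abs (hA.eigenvalues m - z)]
          exact mul_le_mul_of_nonneg_right (pow_le_pow_left₀ hδpos.le (hδ m hm) 2) (sq_nonneg _)
        _ ≤ ∑ m, ((hA.eigenvalues m - z) * c m) ^ 2 :=
          Finset.sum_le_sum_of_subset_of_nonneg (Finset.subset_univ L)
            fun m _ _ => sq_nonneg _
        _ = R := hparr
  · rw [abs_sub_comm]
    exact Real.abs_le_sqrt hi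
end
end
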